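/- arXiv:1205.5405 — 4 statements merged into one kernel-verified Lean document; each statement's English description precedes it below -/
import Mathlib

section
/- Let k ∈ [2,3) be a rational and ε a positive real such that ε < (1+ε)/(k+ε). Then there exist a graph G with fractional chromatic number k, a subset W of its vertex set whose vertices are at pairwise graph distance at least four, and a fractional (k+ε)-precoloring of W that cannot be extended to a fractional (k+ε)-coloring of G. -/
/-!
Put `k = p / q` and `r = k + ε`. The core of the graph is the circular clique `K_{p/q}` on
`ZMod p`, where `a` and `b` are adjacent when their circular distance is at least `q`. Its
independence number is `q` (`card_le_of_indep`). Averaging the size of the independent set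
`I ∪ (J \ N[I])` over all translates `J` of an interval of `q` consecutive vertices gives
`p |I| ≤ q |N[I]|` for every independent set `I` (`card_nbhd`), that is, `|N(I)| ≥ (k - 1) |I|`.
Applied to the set of vertices whose color set contains a point `t`, and integrated over `t`, this
shows that in every fractional coloring of the core, with any number of colors, some vertex `v`
has a neighborhood whose colors cover a set `U` of measure at least `k - 1` (`exists_big_nbhd`).

The full graph `bigGraph` has, for each core vertex `v` and each `i < N`, a copy of `v` joined to
the core neighbors of `v`, and a leaf attached to this copy. The leaves form `W`; they are at
pairwise distance at least four, and the graph retracts onto the core, so its fractional chromatic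
number is `k`. The `i`-th leaf at `v` is precolored with the `i`-th of `N` equally spaced rotations
of the interval `[0,1)` in the circle `[0,r)`. Each point lies in at most `N / r + 1` of them, so one
of them meets `U` in measure at most `(1 / r + 1 / N) |U|`. The corresponding copy of `v` must avoid
both `U` and the color set of its leaf, which together have measure at least
`1 + (k - 1) (1 - 1 / r - 1 / N)`. For large `N` this exceeds `r - 1`, by the assumption on `ε`.
-/

open MeasureTheory

/-- A fractional `r`-coloring of a graph `G`: an assignment of measurable subsets of the
real interval `[0,r)` to the vertices such that each vertex receives a set of Lebesgue
measure one and adjacent vertices receive disjoint sets. -/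
def IsFracColoring {V : Type*} (G : SimpleGraph V) (r : ℝ) (c : V → Set ℝ) : Prop :=
  (∀ v, c v ⊆ Set.Ico 0 r) ∧ (∀ v, MeasurableSet (c v)) ∧ (∀ v, volume (c v) = 1) ∧
    ∀ u v, G.Adj u v → Disjoint (c u) (c v)

/-- `G` is fractionally `r`-colorable. -/
def FracColorable {V : Type*} (G : SimpleGraph V) (r : ℝ) : Prop :=
  ∃ c, IsFracColoring G r c

/-- A fractional `r`-precoloring of the set `W` of vertices: each vertex of `W` is
assigned a measurable subset of `[0,r)` of Lebesgue measure one. -/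
def IsFracPrecoloring {V : Type*} (r : ℝ) (W : Set V) (P : V → Set ℝ) : Prop :=
  ∀ w ∈ W, P w ⊆ Set.Ico 0 r ∧ MeasurableSet (P w) ∧ volume (P w) = 1

/-- The vertices of `W` are at pairwise graph distance at least `d` in `G`
(every walk between two distinct vertices of `W` has length at least `d`). -/
def DistAtLeast {V : Type*} (G : SimpleGraph V) (d : ℕ) (W : Set V) : Prop :=
  ∀ u ∈ W, ∀ v ∈ W, u ≠ v → ∀ w : G.Walk u v, d ≤ w.length

/-- `G` has fractional chromatic number `r`: `r` is the minimum real such that `G` admits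
a fractional `r`-coloring. -/
def IsFracChromNum {V : Type*} (G : SimpleGraph V) (r : ℝ) : Prop :=
  FracColorable G r ∧ ∀ r' : ℝ, FracColorable G r' → r ≤ r'

/-! ### The circular clique -/

/-- The circular clique `K_{p/q}`: vertices `ZMod p`, two of them adjacent when their circular
distance is at least `q`. -/
def circ (p q : ℕ) [NeZero p] (hq : 0 < q) : SimpleGraph (ZMod p) where
  Adj a b := q ≤ (a - b).val ∧ (a - b).val ≤ p - q
  symm := ⟨by
    intro a b h
    have h0 : a - b ≠ 0 := by
      intro h0
      rw [h0, ZMod.val_zero] at h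
      omega
    have : NeZero (a - b) := ⟨h0⟩
    have h1 := ZMod.val_neg_of_ne_zero (a - b)
    rw [neg_sub] at h1
    have := ZMod.val_lt (a - b)
    omega⟩
  loopless := ⟨by
    intro a h
    rw [sub_self, ZMod.val_zero] at h
    omega⟩

/-- The interval of `q` cyclically consecutive vertices starting at `s`. -/
def arc (p q : ℕ) [NeZero p] (s : ZMod p) : Finset (ZMod p) :=
  Finset.univ.filter fun v => (v - s).val < q

section Circ

variable {p q : ℕ} [NeZero p]

lemma card_val_lt (hpq : 2 * q ≤ p) :
    (Finset.univ.filter fun v : ZMod p => v.val < q).card = q := by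
  have : (Finset.univ.filter fun v : ZMod p => v.val < q).image ZMod.val = Finset.range q := by
    ext n
    simp only [Finset.mem_image, Finset.mem_filter, Finset.mem_univ, true_and, Finset.mem_range]
    constructor
    · rintro ⟨a, ha, rfl⟩
      exact ha
    · intro hn
      have : (n : ZMod p).val = n := ZMod.val_cast_of_lt (by omega)
      exact ⟨n, by omega, this⟩
  rw [← Finset.card_image_of_injective _ (ZMod.val_injective p), this, Finset.card_range]

lemma card_arc (hpq : 2 * q ≤ p) (s : ZMod p) : (arc p q s).card = q := by
  refine Eq.trans ?_ (card_val_lt hpq)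
  apply Finset.card_bij (fun v _ => v - s)
  · simp [arc]
  · simp
  · intro b hb
    exact ⟨b + s, by simpa [arc] using hb, by simp⟩

lemma card_arc_dual (hpq : 2 * q ≤ p) (v : ZMod p) :
    (Finset.univ.filter fun s => v ∈ arc p q s).card = q := by
  refine Eq.trans ?_ (card_val_lt hpq)
  apply Finset.card_bij (fun s _ => v - s)
  · simp [arc]
  · simp
  · intro b hb
    exact ⟨v - b, by simpa [arc] using hb, by simp⟩

lemma not_adj_of_small (hq : 0 < q) {a b s : ZMod p} (ha : (a - s).val < q)
    (hb : (b - s).val < q) : ¬ (circ p q hq).Adj a b := by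
  intro h
  have key : ∀ x y : ZMod p, (circ p q hq).Adj x y → (x - s).val < q →
      (y - s).val ≤ (x - s).val → False := by
    intro x y hxy hx hle
    have h1 : (x - y).val = (x - s).val - (y - s).val := by
      rw [← ZMod.val_sub hle]
      congr 1
      ring
    have := hxy.1
    omega
  rcases le_total (b - s).val (a - s).val with hle | hle
  · exact key a b h ha hle
  · exact key b a h.symm hb hle

/-- The independence number of `K_{p/q}` is at most `q`. Relative to a vertex `a` of the set `I`,
all vertices of `I` lie at offsets in `(-q, q)`, and of two offsets that differ by `q` at most
one occurs. -/
lemma card_le_of_indep (hq : 0 < q) (hpq : 2 * q ≤ p) (I : Finset (ZMod p))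
    (hI : ∀ a ∈ I, ∀ b ∈ I, ¬ (circ p q hq).Adj a b) : I.card ≤ q := by
  rcases I.eq_empty_or_nonempty with rfl | ⟨a, ha⟩
  · simp
  have hoff : ∀ x ∈ I, (x - a).val < q ∨ p - q < (x - a).val := by
    intro x hx
    by_contra hcon
    push Not at hcon
    exact hI x hx a ha hcon
  have hcross : ∀ x ∈ I, ∀ y ∈ I, (y - a).val ≠ (x - a).val + (p - q) := by
    intro x hx y hy heq
    have h1 : (y - x).val = (y - a).val - (x - a).val := by
      rw [← ZMod.val_sub (by omega)]
      congr 1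
      ring
    exact hI y hy x hx ⟨by omega, by omega⟩
  have hinj : ∀ x y : ZMod p, (x - a).val = (y - a).val → x = y := by
    intro x y hxy
    exact sub_left_injective (ZMod.val_injective p hxy)
  rw [← Finset.card_range q]
  apply Finset.card_le_card_of_injOn
    (fun x => if (x - a).val < q then (x - a).val else (x - a).val - (p - q))
  · intro x hx
    have h1 := hoff x hx
    have h2 := ZMod.val_lt (x - a)
    simp only [Finset.coe_range, Set.mem_Iio]
    split_ifs <;> omega
  · intro x hx y hy hxy
    have h1 := hoff x hx
    have h2 := hoff y hy
    have h3 := hcross x hx y hy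
    have h4 := hcross y hy x hx
    apply hinj
    simp only at hxy
    split_ifs at hxy <;> omega

open Classical in
/-- Independent sets of `K_{p/q}` expand by the factor `p / q - 1`. For each `s`, the set `I`
together with the vertices of `arc p q s` outside the closed neighborhood of `I` is independent,
hence has at most `q` elements; the bound follows by summing over `s`. -/
lemma card_nbhd (hq : 0 < q) (hpq : 2 * q ≤ p) (I : Finset (ZMod p))
    (hI : ∀ a ∈ I, ∀ b ∈ I, ¬ (circ p q hq).Adj a b) :
    p * I.card ≤
      q * (I.card + (Finset.univ.filter fun v => ∃ u ∈ I, (circ p q hq).Adj u v).card) := by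
  set N := Finset.univ.filter fun v => ∃ u ∈ I, (circ p q hq).Adj u v with hN
  set M := I ∪ N with hM
  have hcard : ∀ s : ZMod p, I.card + (arc p q s \ M).card ≤ q := by
    intro s
    rw [← Finset.card_union_of_disjoint]
    · apply card_le_of_indep hq hpq
      intro a ha b hb hab
      simp only [Finset.mem_union, Finset.mem_sdiff, hM, hN, Finset.mem_filter,
        Finset.mem_univ, true_and, not_or, not_exists, not_and, arc] at ha hb
      rcases ha with ha | ha <;> rcases hb with hb | hb
      · exact hI a ha b hb hab
      · exact hb.2.2 a ha hab
      · exact ha.2.2 b hb hab.symm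
      · exact not_adj_of_small hq ha.1 hb.1 hab
    · rw [Finset.disjoint_left]
      intro a ha ha'
      simp [hM, ha] at ha'
  have hsum : ∑ s : ZMod p, (arc p q s \ M).card = Mᶜ.card * q := by
    have h1 : ∀ s : ZMod p, (arc p q s \ M).card = ∑ v ∈ Mᶜ, if v ∈ arc p q s then 1 else 0 := by
      intro s
      rw [← Finset.card_filter]
      congr 1
      ext v
      simp [and_comm]
    simp_rw [h1]
    rw [Finset.sum_comm, Finset.card_eq_sum_ones, Finset.sum_mul]
    refine Finset.sum_congr rfl fun v _ => ?_
    rw [← Finset.card_filter, card_arc_dual hpq, one_mul]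
  have htot := Finset.sum_le_sum fun s (_ : s ∈ (Finset.univ : Finset (ZMod p))) => hcard s
  rw [Finset.sum_add_distrib, hsum] at htot
  simp only [Finset.sum_const, Finset.card_univ, ZMod.card, smul_eq_mul] at htot
  have hMc : M.card + Mᶜ.card = p := by
    rw [Finset.card_add_card_compl, ZMod.card]
  have hMle : M.card ≤ I.card + N.card := Finset.card_union_le _ _
  nlinarith

end Circ

/-! ### Double counting of points -/

open Classical in
lemma integral_card {τ : Type*} [Fintype τ] (C : τ → Set ℝ) (hC : ∀ i, MeasurableSet (C i))
    (hC' : ∀ i, volume (C i) ≠ ⊤) :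
    Integrable (fun t => ((Finset.univ.filter fun i => t ∈ C i).card : ℝ)) ∧
      ∫ t, ((Finset.univ.filter fun i => t ∈ C i).card : ℝ) = ∑ i, volume.real (C i) := by
  have hrw : (fun t => ((Finset.univ.filter fun i => t ∈ C i).card : ℝ)) =
      fun t => ∑ i, (C i).indicator (fun _ => (1 : ℝ)) t := by
    ext t
    simp [Set.indicator_apply]
  have hint : ∀ i, Integrable ((C i).indicator (fun _ => (1 : ℝ))) := fun i =>
    (integrable_indicator_iff (hC i)).2 (integrableOn_const (hC' i))
  rw [hrw]
  refine ⟨integrable_finsetSum _ fun i _ => hint i, ?_⟩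
  rw [integral_finsetSum _ fun i _ => hint i]
  refine Finset.sum_congr rfl fun i _ => ?_
  rw [integral_indicator (hC i)]
  simp

open Classical in
/-- A pointwise inequality between covering multiplicities integrates to an inequality between
total measures. -/
lemma sum_measure_le {ι κ : Type*} [Fintype ι] [Fintype κ] (A : ι → Set ℝ) (B : κ → Set ℝ)
    (hA : ∀ i, MeasurableSet (A i)) (hB : ∀ j, MeasurableSet (B j))
    (hA' : ∀ i, volume (A i) ≠ ⊤) (hB' : ∀ j, volume (B j) ≠ ⊤) (a b : ℝ)
    (h : ∀ t, a * ((Finset.univ.filter fun i => t ∈ A i).card : ℝ) ≤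
      b * ((Finset.univ.filter fun j => t ∈ B j).card : ℝ)) :
    a * ∑ i, volume.real (A i) ≤ b * ∑ j, volume.real (B j) := by
  obtain ⟨iA, eA⟩ := integral_card A hA hA'
  obtain ⟨iB, eB⟩ := integral_card B hB hB'
  rw [← eA, ← eB, ← integral_const_mul, ← integral_const_mul]
  exact integral_mono (iA.const_mul a) (iB.const_mul b) h

/-! ### Fractional colorings of the circular clique -/

section CircColoring

variable {p q : ℕ} [NeZero p]

lemma sum_color_measure {V : Type*} [Fintype V] {G : SimpleGraph V} {r : ℝ} {c : V → Set ℝ}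
    (hc : IsFracColoring G r c) : ∑ v, volume.real (c v) = Fintype.card V := by
  simp [Measure.real, hc.2.2.1]

lemma circ_le_of_colorable (hq : 0 < q) (hpq : 2 * q ≤ p) {r : ℝ} {c : ZMod p → Set ℝ}
    (hc : IsFracColoring (circ p q hq) r c) : (p : ℝ) / q ≤ r := by
  classical
  have hmain := sum_measure_le c (fun _ : Unit => Set.Ico 0 r) hc.2.1
    (fun _ => measurableSet_Ico) (fun v => by simp [hc.2.2.1 v]) (fun _ => by simp) 1 q (by
      intro t
      by_cases ht : t ∈ Set.Ico 0 r
      · have hle := card_le_of_indep hq hpq (Finset.univ.filter fun v => t ∈ c v) (by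
          intro a ha b hb hab
          simp only [Finset.mem_filter, Finset.mem_univ, true_and] at ha hb
          exact Set.disjoint_left.1 (hc.2.2.2 a b hab) ha hb)
        have : ((Finset.univ.filter fun v => t ∈ c v).card : ℝ) ≤ q := by exact_mod_cast hle
        simpa [ht] using this
      · have : ∀ v, t ∉ c v := fun v hv => ht (hc.1 v hv)
        rw [Finset.filter_false_of_mem fun v _ => this v]
        simp only [Finset.card_empty, Nat.cast_zero, mul_zero]
        positivity)
  rw [sum_color_measure hc] at hmain
  simp only [ZMod.card, one_mul, Finset.univ_unique, Finset.sum_const, Finset.card_singleton,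
    one_smul, Real.volume_real_Ico, sub_zero] at hmain
  have hp : (0 : ℝ) < p := by exact_mod_cast NeZero.pos p
  have hq' : (0 : ℝ) < q := by exact_mod_cast hq
  rcases le_total r 0 with hr | hr
  · rw [max_eq_right hr] at hmain
    linarith
  · rw [max_eq_left hr] at hmain
    rw [div_le_iff₀ hq']
    linarith

/-- In every fractional coloring of `K_{p/q}`, regardless of the number of colors, the colors of
the neighborhood of some vertex cover measure at least `p / q - 1`. -/
lemma exists_big_nbhd (hq : 0 < q) (hpq : 2 * q ≤ p) {r : ℝ} {c : ZMod p → Set ℝ}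
    (hc : IsFracColoring (circ p q hq) r c) :
    ∃ v, (p : ℝ) / q - 1 ≤ volume.real (⋃ u, ⋃ (_ : (circ p q hq).Adj u v), c u) := by
  classical
  by_contra hcon
  push Not at hcon
  have hq' : (0 : ℝ) < q := by exact_mod_cast hq
  set U : ZMod p → Set ℝ := fun v => ⋃ u, ⋃ (_ : (circ p q hq).Adj u v), c u with hU
  have hUm : ∀ v, MeasurableSet (U v) := fun v =>
    MeasurableSet.iUnion fun u => MeasurableSet.iUnion fun _ => hc.2.1 u
  have hUsub : ∀ v, U v ⊆ Set.Ico 0 r := fun v =>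
    Set.iUnion_subset fun u => Set.iUnion_subset fun _ => hc.1 u
  have hmain := sum_measure_le c U hc.2.1 hUm (fun v => by simp [hc.2.2.1 v])
    (fun v => ((measure_mono (hUsub v)).trans_lt (by simp)).ne) ((p : ℝ) - q) q (by
      intro t
      have hle := card_nbhd hq hpq (Finset.univ.filter fun v => t ∈ c v) (by
        intro a ha b hb hab
        simp only [Finset.mem_filter, Finset.mem_univ, true_and] at ha hb
        exact Set.disjoint_left.1 (hc.2.2.2 a b hab) ha hb)
      have heq : (Finset.univ.filter fun v => t ∈ U v) = Finset.univ.filter fun v =>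
          ∃ u ∈ Finset.univ.filter (fun v => t ∈ c v), (circ p q hq).Adj u v := by
        ext v
        simp [hU, and_comm]
      have hle' : p * (Finset.univ.filter fun v => t ∈ c v).card ≤
          q * ((Finset.univ.filter fun v => t ∈ c v).card +
            (Finset.univ.filter fun v => t ∈ U v).card) := by
        rw [heq]
        convert hle
      have hreal : (p : ℝ) * ((Finset.univ.filter fun v => t ∈ c v).card : ℝ) ≤
          q * (((Finset.univ.filter fun v => t ∈ c v).card : ℝ) +
            ((Finset.univ.filter fun v => t ∈ U v).card : ℝ)) := by exact_mod_cast hle'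
      linarith)
  rw [sum_color_measure hc, ZMod.card] at hmain
  have hlt : ∑ v, volume.real (U v) < ∑ _v : ZMod p, ((p : ℝ) / q - 1) :=
    Finset.sum_lt_sum_of_nonempty Finset.univ_nonempty fun v _ => hcon v
  rw [Finset.sum_const, Finset.card_univ, ZMod.card, nsmul_eq_mul] at hlt
  have h2 := mul_lt_mul_of_pos_left hlt hq'
  have h3 : (q : ℝ) * (p * ((p : ℝ) / q - 1)) = (p - q) * p := by
    field_simp
  linarith

/-- The cell of length `1 / q` with index `u`; the cells partition `[0, p / q)`. -/
def cell (q : ℕ) (u : ZMod p) : Set ℝ := Set.Ico ((u.val : ℝ) / q) ((u.val + 1 : ℝ) / q)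

lemma cell_disjoint (hq : 0 < q) {u v : ZMod p} (huv : u ≠ v) :
    Disjoint (cell q u) (cell q v) := by
  have hq' : (0 : ℝ) < q := by exact_mod_cast hq
  rw [Set.disjoint_left]
  intro t hu hv
  simp only [cell, Set.mem_Ico, div_le_iff₀ hq', lt_div_iff₀ hq'] at hu hv
  have h1 : (u.val : ℝ) < v.val + 1 := by linarith
  have h2 : (v.val : ℝ) < u.val + 1 := by linarith
  have h1' : u.val < v.val + 1 := by exact_mod_cast h1
  have h2' : v.val < u.val + 1 := by exact_mod_cast h2
  exact huv (ZMod.val_injective p (by omega))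

/-- The optimal coloring: `v` receives the `q` cells with indices in `arc p q v`. -/
lemma circ_colorable (hq : 0 < q) (hpq : 2 * q ≤ p) :
    FracColorable (circ p q hq) ((p : ℝ) / q) := by
  have hq' : (0 : ℝ) < q := by exact_mod_cast hq
  refine ⟨fun v => ⋃ u ∈ arc p q v, cell q u, ?_, ?_, ?_, ?_⟩
  · intro v
    refine Set.iUnion₂_subset fun u _ => ?_
    apply Set.Ico_subset_Ico (by positivity)
    apply div_le_div_of_nonneg_right _ hq'.le
    have := ZMod.val_lt u
    exact_mod_cast this
  · intro v
    exact Finset.measurableSet_biUnion _ fun u _ => measurableSet_Ico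
  · intro v
    rw [measure_biUnion_finset (fun a _ b _ hab => cell_disjoint hq hab)
      fun u _ => measurableSet_Ico]
    have h1 : ∀ u : ZMod p, volume (cell q u) = (q : ENNReal)⁻¹ := by
      intro u
      rw [cell, Real.volume_Ico, ← sub_div, add_sub_cancel_left, one_div,
        ENNReal.ofReal_inv_of_pos hq', ENNReal.ofReal_natCast]
    simp_rw [h1]
    rw [Finset.sum_const, card_arc hpq, nsmul_eq_mul]
    exact ENNReal.mul_inv_cancel (by exact_mod_cast hq.ne') (ENNReal.natCast_ne_top q)
  · intro v w hvw
    rw [Set.disjoint_left]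
    intro t hv hw
    simp only [Set.mem_iUnion, exists_prop] at hv hw
    obtain ⟨a, ha, hta⟩ := hv
    obtain ⟨b, hb, htb⟩ := hw
    have hab : a = b := by
      by_contra hne
      exact Set.disjoint_left.1 (cell_disjoint hq hne) hta htb
    subst hab
    simp only [arc, Finset.mem_filter, Finset.mem_univ, true_and] at ha hb
    have h1 := hvw.1
    -- If `a` lies in both arcs, then `v` and `w` lie in the backward interval of length `q` at `a`.
    rcases le_total (a - v).val (a - w).val with hle | hle
    · have h2 : (v - w).val = (a - w).val - (a - v).val := by
        rw [← ZMod.val_sub hle]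
        congr 1
        ring
      omega
    · have h2 : (w - v).val = (a - v).val - (a - w).val := by
        rw [← ZMod.val_sub hle]
        congr 1
        ring
      have h3 := hvw.symm.1
      omega

lemma circ_exists_adj (hq : 0 < q) (hpq : 2 * q ≤ p) (v : ZMod p) :
    ∃ u, (circ p q hq).Adj v u := by
  refine ⟨v - q, ?_⟩
  have h1 : ((q : ℕ) : ZMod p).val = q := ZMod.val_cast_of_lt (by omega)
  show q ≤ (v - (v - q)).val ∧ (v - (v - q)).val ≤ p - q
  rw [sub_sub_cancel, h1]
  omega

end CircColoring

/-! ### Copies and leaves -/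

/-- Vertices of `bigGraph`: the core vertices, the copies `(v, i)`, and the leaves `(v, i)`. -/
abbrev Vert (V : Type) (N : ℕ) : Type := V ⊕ (V × Fin N) ⊕ (V × Fin N)

/-- The adjacency relation of `bigGraph`. -/
def bigAdj {V : Type} (H : SimpleGraph V) (N : ℕ) : Vert V N → Vert V N → Prop
  | .inl u, .inl v => H.Adj u v
  | .inl u, .inr (.inl x) => H.Adj u x.1
  | .inr (.inl x), .inl u => H.Adj x.1 u
  | .inr (.inl x), .inr (.inr y) => x = y
  | .inr (.inr x), .inr (.inl y) => x = y
  | _, _ => False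

/-- The graph obtained from `H` by adding, for each vertex `v` and each `i < N`, a copy of `v` with
the same neighbors in `H`, and a leaf attached to this copy. -/
def bigGraph {V : Type} (H : SimpleGraph V) (N : ℕ) : SimpleGraph (Vert V N) where
  Adj := bigAdj H N
  symm := ⟨by
    rintro (u | x | x) (v | y | y) h <;> simp only [bigAdj] at h ⊢
    all_goals exact h.symm⟩
  loopless := ⟨by
    rintro (u | x | x) h <;> simp [bigAdj] at h⟩

/-- A function that grows by at most one along each edge bounds walk lengths from below. -/
lemma potential_le {V : Type*} {G : SimpleGraph V} (f : V → ℕ)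
    (hf : ∀ a b, G.Adj a b → f b ≤ f a + 1) {u v : V} (w : G.Walk u v) :
    f v ≤ f u + w.length := by
  induction w with
  | nil => simp
  | cons h w ih =>
    have := hf _ _ h
    rw [SimpleGraph.Walk.length_cons]
    omega

lemma big_dist {V : Type} (H : SimpleGraph V) (N : ℕ) :
    DistAtLeast (bigGraph H N) 4 (Set.range fun x : V × Fin N => Sum.inr (Sum.inr x)) := by
  classical
  rintro _ ⟨x, rfl⟩ _ ⟨y, rfl⟩ hne w
  have hxy : y ≠ x := by
    rintro rfl
    exact hne rfl
  -- The potential is the distance from the leaf `x`, capped at `4`.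
  let f : Vert V N → ℕ := fun a => match a with
    | .inl _ => 2
    | .inr (.inl z) => if z = x then 1 else 3
    | .inr (.inr z) => if z = x then 0 else 4
  have := potential_le (G := bigGraph H N) f (by
    rintro (u | a | a) (v | b | b) h <;> simp only [bigGraph, bigAdj] at h <;> simp only [f]
    · omega
    · split_ifs <;> omega
    · split_ifs <;> omega
    · subst h
      split_ifs <;> omega
    · subst h
      split_ifs <;> omega) w
  simpa [f, hxy] using this

/-- If no vertex of `H` is isolated, colorings of `H` extend to `bigGraph`: a copy of `v` takes the
colors of `v`, and its leaf those of a neighbor of `v`. -/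
lemma big_colorable {V : Type} (H : SimpleGraph V) (N : ℕ) {r : ℝ}
    (hH : ∀ v, ∃ u, H.Adj v u) (h : FracColorable H r) : FracColorable (bigGraph H N) r := by
  obtain ⟨c, h1, h2, h3, h4⟩ := h
  choose g hg using hH
  let φ : Vert V N → V := fun a => match a with
    | .inl v => v
    | .inr (.inl z) => z.1
    | .inr (.inr z) => g z.1
  refine ⟨fun a => c (φ a), fun a => h1 _, fun a => h2 _, fun a => h3 _, ?_⟩
  intro a b hab
  apply h4
  rcases a with u | x | x <;> rcases b with v | y | y <;>
    simp only [bigGraph, bigAdj] at hab <;> simp only [φ]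
  · exact hab
  · exact hab
  · exact hab
  · subst hab
    exact hg _
  · subst hab
    exact (hg _).symm

lemma core_coloring {V : Type} {H : SimpleGraph V} {N : ℕ} {r : ℝ} {c : Vert V N → Set ℝ}
    (hc : IsFracColoring (bigGraph H N) r c) : IsFracColoring H r fun v => c (.inl v) :=
  ⟨fun _ => hc.1 _, fun _ => hc.2.1 _, fun _ => hc.2.2.1 _,
    fun u v huv => hc.2.2.2 (.inl u) (.inl v) huv⟩

/-! ### Rotations of the unit interval -/

/-- The interval `[a, a + 1)` wrapped around the circle `[0, r)`. -/
def rot (r a : ℝ) : Set ℝ := Set.Ico a (min (a + 1) r) ∪ Set.Ico 0 (a + 1 - r)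

lemma rot_measurable (r a : ℝ) : MeasurableSet (rot r a) := measurableSet_Ico.union measurableSet_Ico

lemma rot_subset {r a : ℝ} (ha : 0 ≤ a) (har : a < r) (hr : 1 ≤ r) :
    rot r a ⊆ Set.Ico 0 r := by
  rintro t (⟨h1, h2⟩ | ⟨h1, h2⟩)
  · exact ⟨by linarith, h2.trans_le (min_le_right _ _)⟩
  · exact ⟨h1, by linarith⟩

lemma rot_volume {r a : ℝ} (har : a < r) (hr : 1 ≤ r) :
    volume (rot r a) = 1 := by
  rw [rot, measure_union _ measurableSet_Ico, Real.volume_Ico, Real.volume_Ico]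
  · rcases le_total (a + 1) r with h | h
    · rw [min_eq_left h, ENNReal.ofReal_of_nonpos (p := a + 1 - r - 0) (by linarith)]
      simp
    · rw [min_eq_right h, ← ENNReal.ofReal_add (by linarith) (by linarith)]
      ring_nf
      simp
  · rw [Set.disjoint_left]
    rintro t ⟨h1, h2⟩ ⟨h3, h4⟩
    linarith

open Classical in
/-- Each point lies in at most `N / r + 1` of the `N` equally spaced rotations: after subtracting
`N` from the indices whose interval wraps around, these become distinct integers in a half-open
interval of length `N / r`. -/
lemma rot_count {r : ℝ} (hr : 1 ≤ r) {N : ℕ} (hN : 0 < N) (t : ℝ) :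
    ((Finset.univ.filter fun i : Fin N => t ∈ rot r (i * r / N)).card : ℝ) ≤ N / r + 1 := by
  have hN' : (0 : ℝ) < N := by exact_mod_cast hN
  have hr' : 0 < r := by linarith
  set x : ℝ := t * N / r with hx
  set L : ℝ := N / r with hL
  have hcard : (Finset.univ.filter fun i : Fin N => t ∈ rot r (i * r / N)).card ≤
      (Finset.Ioc ⌊x - L⌋ ⌊x⌋).card := by
    apply Finset.card_le_card_of_injOn
      (fun i : Fin N => if (i : ℝ) * r / N ≤ t then (i : ℤ) else (i : ℤ) - N)
    · intro i hi
      simp only [Finset.coe_filter, Finset.mem_univ, true_and, Set.mem_ofPred_eq, rot,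
        Set.mem_union, Set.mem_Ico, lt_min_iff] at hi
      simp only [Finset.coe_Ioc, Set.mem_Ioc, Int.floor_lt, Int.le_floor]
      split_ifs with hle
      · have h1 : t < i * r / N + 1 := by
          rcases hi with hi | hi
          · exact hi.2.1
          · linarith
        push_cast
        constructor
        · have : x - L < (i * r / N + 1) * N / r - N / r := by
            rw [hx, hL]
            gcongr
          have h2 : ((i : ℝ) * r / N + 1) * N / r - N / r = i := by
            field_simp
            ring
          linarith
        · have : (i * r / N) * N / r ≤ x := by
            rw [hx]
            gcongr
          have h2 : ((i : ℝ) * r / N) * N / r = i := by field_simp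
          linarith
      · have h1 : 0 ≤ t ∧ t < i * r / N + 1 - r := by
          rcases hi with hi | hi
          · exact absurd hi.1 hle
          · exact hi
        push_cast
        constructor
        · have : x - L < (i * r / N + 1 - r) * N / r - N / r := by
            rw [hx, hL]
            gcongr
            exact h1.2
          have h2 : ((i : ℝ) * r / N + 1 - r) * N / r - N / r = i - N := by
            field_simp
            ring
          linarith
        · have h2 : 0 ≤ x := by
            rw [hx]
            have := h1.1
            positivity
          have h3 : (i : ℝ) < N := by exact_mod_cast i.2
          linarith
    · intro i _ j _ hij
      have hi := i.2
      have hj := j.2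
      apply Fin.ext
      simp only at hij
      split_ifs at hij <;> omega
  have h1 : ((Finset.univ.filter fun i : Fin N => t ∈ rot r (i * r / N)).card : ℝ) ≤
      ((Finset.Ioc ⌊x - L⌋ ⌊x⌋).card : ℝ) := by exact_mod_cast hcard
  rw [Int.card_Ioc] at h1
  have hLpos : 0 < L := by positivity
  have hfl : ⌊x - L⌋ ≤ ⌊x⌋ := Int.floor_mono (by linarith)
  have h2 : (((⌊x⌋ - ⌊x - L⌋).toNat : ℕ) : ℝ) = (⌊x⌋ : ℝ) - ⌊x - L⌋ := by
    have : (((⌊x⌋ - ⌊x - L⌋).toNat : ℕ) : ℤ) = ⌊x⌋ - ⌊x - L⌋ := Int.toNat_of_nonneg (by omega)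
    exact_mod_cast this
  have h3 := Int.floor_le x
  have h4 := Int.lt_floor_add_one (x - L)
  linarith

lemma exists_rot_small {r : ℝ} (hr : 1 ≤ r) {N : ℕ} (hN : 0 < N) {U : Set ℝ}
    (hU : MeasurableSet U) (hU' : volume U ≠ ⊤) :
    ∃ i : Fin N, volume.real (rot r (i * r / N) ∩ U) ≤ (1 / r + 1 / N) * volume.real U := by
  classical
  by_contra hcon
  push Not at hcon
  have hN' : (0 : ℝ) < N := by exact_mod_cast hN
  have : Nonempty (Fin N) := ⟨⟨0, hN⟩⟩
  have hmain := sum_measure_le (fun i : Fin N => rot r (i * r / N) ∩ U) (fun _ : Unit => U)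
    (fun i => (rot_measurable _ _).inter hU) (fun _ => hU)
    (fun i => ((measure_mono Set.inter_subset_right).trans_lt hU'.lt_top).ne)
    (fun _ => hU') 1 (N / r + 1) (by
      intro t
      by_cases ht : t ∈ U
      · simpa [ht] using rot_count hr hN t
      · simp [ht])
  have hlt := Finset.sum_lt_sum_of_nonempty (Finset.univ_nonempty (α := Fin N))
    fun i _ => hcon i
  rw [Finset.sum_const, Finset.card_univ, Fintype.card_fin, nsmul_eq_mul] at hlt
  simp only [one_mul, Finset.univ_unique, Finset.sum_const, Finset.card_singleton,
    one_smul] at hmain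
  have h3 : (N : ℝ) * ((1 / r + 1 / N) * volume.real U) = (N / r + 1) * volume.real U := by
    field_simp
  linarith

/-- Lower bound for distance four. -/
theorem lower_bound_d4 (k : ℚ) (hk1 : 2 ≤ k) (hk2 : k < 3) (ε : ℝ) (hε : 0 < ε)
    (h : ε < (1 + ε) / ((k : ℝ) + ε)) :
    ∃ (V : Type) (_ : Fintype V) (G : SimpleGraph V) (W : Set V) (P : V → Set ℝ),
      IsFracChromNum G (k : ℝ) ∧ DistAtLeast G 4 W ∧
        IsFracPrecoloring ((k : ℝ) + ε) W P ∧
        ¬ ∃ c, IsFracColoring G ((k : ℝ) + ε) c ∧ ∀ w ∈ W, c w = P w := by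
  obtain ⟨p, q, hq, hpq, hkpq⟩ : ∃ p q : ℕ, 0 < q ∧ 2 * q ≤ p ∧ (k : ℝ) = (p : ℝ) / q := by
    have hnum : (0 : ℤ) ≤ k.num := Rat.num_nonneg.2 (by linarith)
    have hcast : ((k.num.toNat : ℕ) : ℤ) = k.num := Int.toNat_of_nonneg hnum
    have hkq : k = (k.num.toNat : ℚ) / k.den := by
      have h1 : ((k.num.toNat : ℕ) : ℚ) = (k.num : ℚ) := by exact_mod_cast hcast
      rw [h1, Rat.num_div_den]
    have hden : (0 : ℚ) < k.den := by exact_mod_cast k.den_pos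
    refine ⟨k.num.toNat, k.den, k.den_pos, ?_, ?_⟩
    · rw [hkq, le_div_iff₀ hden] at hk1
      exact_mod_cast hk1
    · have h2 := congrArg (fun x : ℚ => (x : ℝ)) hkq
      push_cast at h2
      exact h2
  have : NeZero p := ⟨by omega⟩
  have hk2R : (2 : ℝ) ≤ k := by exact_mod_cast hk1
  set r : ℝ := (k : ℝ) + ε with hr
  have hr1 : 1 ≤ r := by linarith
  have hr0 : 0 < r := by linarith
  have hgap : 0 < 1 - ((k : ℝ) - 1) / r - ε := by
    have h1 : (1 + ε) / r = 1 - ((k : ℝ) - 1) / r := by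
      field_simp
      rw [hr]
      ring
    linarith
  obtain ⟨n, hn⟩ := exists_nat_gt (((k : ℝ) - 1) / (1 - ((k : ℝ) - 1) / r - ε))
  obtain ⟨N, hN2, hNn⟩ : ∃ N : ℕ, 2 ≤ N ∧ n ≤ N := ⟨max 2 n, le_max_left _ _, le_max_right _ _⟩
  have hN : 0 < N := by omega
  have hN' : (0 : ℝ) < N := by exact_mod_cast hN
  have hNgap : ((k : ℝ) - 1) / N < 1 - ((k : ℝ) - 1) / r - ε := by
    have h1 : (n : ℝ) ≤ N := by exact_mod_cast hNn
    rw [div_lt_iff₀ hgap] at hn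
    rw [div_lt_iff₀ hN']
    nlinarith
  have hcirc := circ_colorable hq hpq
  refine ⟨Vert (ZMod p) N, inferInstance, bigGraph (circ p q hq) N,
    Set.range fun x : ZMod p × Fin N => Sum.inr (Sum.inr x),
    fun a => match a with
      | .inr (.inr x) => rot r (x.2 * r / N)
      | _ => ∅, ⟨?_, ?_⟩, big_dist _ _, ?_, ?_⟩
  · rw [hkpq]
    exact big_colorable _ _ (circ_exists_adj hq hpq) hcirc
  · rintro r' ⟨c, hc⟩
    rw [hkpq]
    exact circ_le_of_colorable hq hpq (core_coloring hc)
  · rintro _ ⟨x, rfl⟩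
    have hx : (x.2 : ℝ) < N := by exact_mod_cast x.2.2
    have h2 : (x.2 : ℝ) * r / N < r := by
      rw [div_lt_iff₀ hN']
      nlinarith
    exact ⟨rot_subset (by positivity) h2 hr1, rot_measurable _ _, rot_volume h2 hr1⟩
  · rintro ⟨c, hc, hcW⟩
    obtain ⟨v, hv⟩ := exists_big_nbhd hq hpq (core_coloring hc)
    set U : Set ℝ := ⋃ u, ⋃ (_ : (circ p q hq).Adj u v), c (.inl u) with hU
    have hUm : MeasurableSet U :=
      MeasurableSet.iUnion fun u => MeasurableSet.iUnion fun _ => hc.2.1 _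
    have hUsub : U ⊆ Set.Ico 0 r :=
      Set.iUnion_subset fun u => Set.iUnion_subset fun _ => hc.1 _
    have hUfin : volume U ≠ ⊤ := ((measure_mono hUsub).trans_lt (by simp)).ne
    obtain ⟨i, hi⟩ := exists_rot_small hr1 hN hUm hUfin
    set R : Set ℝ := c (.inr (.inr (v, i))) with hRdef
    have hR : R = rot r (i * r / N) := hcW _ ⟨(v, i), rfl⟩
    rw [← hR] at hi
    set C : Set ℝ := c (.inr (.inl (v, i))) with hCdef
    have hRm : MeasurableSet R := hc.2.1 _
    have hR1 : volume.real R = 1 := by simp [Measure.real, hRdef, hc.2.2.1]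
    have hC1 : volume.real C = 1 := by simp [Measure.real, hCdef, hc.2.2.1]
    have hRfin : volume R ≠ ⊤ := by simp [hRdef, hc.2.2.1]
    have hCfin : volume C ≠ ⊤ := by simp [hCdef, hc.2.2.1]
    have hdisj : Disjoint (R ∪ U) C := by
      rw [Set.disjoint_union_left]
      refine ⟨hc.2.2.2 (.inr (.inr (v, i))) (.inr (.inl (v, i))) rfl, ?_⟩
      rw [Set.disjoint_iUnion_left]
      intro u
      rw [Set.disjoint_iUnion_left]
      intro huv
      exact hc.2.2.2 (.inl u) (.inr (.inl (v, i))) huv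
    have hunion : volume.real (R ∪ U) + volume.real (R ∩ U) = 1 + volume.real U := by
      rw [measureReal_union_add_inter hUm hRfin hUfin, hR1]
    have htot : volume.real (R ∪ U ∪ C) = volume.real (R ∪ U) + 1 := by
      rw [measureReal_union hdisj (hc.2.1 _) (measure_union_ne_top hRfin hUfin) hCfin, hC1]
    have hle : volume.real (R ∪ U ∪ C) ≤ r := by
      have h1 : volume.real (R ∪ U ∪ C) ≤ volume.real (Set.Ico 0 r) :=
        measureReal_mono (Set.union_subset (Set.union_subset (hc.1 _) hUsub) (hc.1 _)) (by simp)
      rwa [Real.volume_real_Ico, sub_zero, max_eq_left hr0.le] at h1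
    rw [← hkpq] at hv
    -- `1 / r` and `1 / N` are at most `1 / 2`, so the bound below increases with the measure of `U`.
    have hcoef : 0 ≤ 1 - 1 / r - 1 / (N : ℝ) := by
      have h1 : 1 / r ≤ 1 / 2 := one_div_le_one_div_of_le (by norm_num) (by linarith)
      have h2 : 1 / (N : ℝ) ≤ 1 / 2 :=
        one_div_le_one_div_of_le (by norm_num) (by exact_mod_cast hN2)
      linarith
    have hmul := mul_le_mul_of_nonneg_right hv hcoef
    have hexp : ((k : ℝ) - 1) * (1 - 1 / r - 1 / (N : ℝ)) =
        (k - 1) - (k - 1) / r - (k - 1) / N := by ring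
    rw [hexp] at hmul
    have hUexp : volume.real U * (1 - 1 / r - 1 / (N : ℝ)) =
        volume.real U - (1 / r + 1 / N) * volume.real U := by ring
    rw [hUexp] at hmul
    linarith
end

section
/- Let d ≥ 6 be an integer with d ≡ 2 (mod 4), set d' = ⌊d/4⌋, let k be a rational and ε a positive real such that 2 ≤ k < 2 + 1/(2d') and ε·Σ_{j=0}^{d'−1} (k−1)^{2j+1} ≥ 1/(k+ε). If G is a fractionally k-colorable graph and W is a subset of its vertex set whose vertices are at pairwise graph distance at least d, then any fractional (k+ε)-precoloring of W can be extended to a fractional (k+ε)-coloring of G. -/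
/-!
Write `N = k + ε` and `D = ⌊d / 4⌋`, so `d = 4 * D + 2`, and fix a fractional `k`-coloring `A`, the
base coloring. It leaves `ε` of the `N` available colors unused ("new colors"). Vertices at distance
more than `2 * D` from `W` keep their base sets, and the vertices of the ball of radius `2 * D`
around each `w ∈ W` interpolate between the prescribed set `P w` and the base coloring. Distinct
balls are disjoint and not joined by edges. Since `2 * D * (k - 2) < 1`, there is no odd closed walk
of length at most `4 * D + 1` (`walk_overlap`, `no_short_odd_closed_walk`), so two vertices at the
same distance from `w` are never adjacent and edges of a ball join consecutive distances only
(`exists_labels`).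

The base coloring can be put in general position with respect to all precolored sets: every atom
of the family `P` receives its own scaled copy of the auxiliary color space `[0, N) × [0, 1)`, whose
first coordinate carries the base coloring (`exists_realization`, `exists_mixture`). Near `w`, the
scheme depends on the atom only through whether it lies in `P w`:

* at distance `2 * j + 1`: inside `P w`, the base set without a fraction `a j`; outside, the whole
  base set and a fraction `b (j + 1)` of the remaining base colors;
* at distance `2 * j`: inside `P w`, the whole base set, a fraction `a j` of the remaining base
  colors, and `x j` new colors; outside, the base set without a fraction `b j`, and `x j` new
  colors.

Adjacent vertices get disjoint sets as soon as `a` and `b` are nonincreasing. Starting from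
`a 0 = 1`, requiring all sets to have measure one gives
`a (j + 1) = a j / (k - 1) ^ 2 - ε * N / (k - 1)` when all new colors are used, and the
hypothesis on `ε` says exactly that this recursion, truncated at `0`, vanishes at `j = D`
(`exists_parameters`). Hence vertices at distance `2 * D` use only their base set and new colors,
which is compatible with the base coloring further out.
-/

open MeasureTheory

/-! ### Splitting sets of reals into pieces of prescribed measure -/

/-- Lebesgue measure has no atoms: a bounded measurable set has measurable subsets of every
smaller measure. -/
lemma exists_subset_measureReal_eq {N : ℝ} (hN : 0 ≤ N) {S : Set ℝ} (hS : MeasurableSet S)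
    (hSN : S ⊆ Set.Ico 0 N) {m : ℝ} (hm0 : 0 ≤ m) (hm : m ≤ volume.real S) :
    ∃ T ⊆ S, MeasurableSet T ∧ volume.real T = m := by
  have hfin : volume S ≠ ⊤ := (measure_lt_top_of_subset hSN (by simp)).ne
  have hcont : Continuous fun t : ℝ => volume.real (S ∩ Set.Iio t) := by
    refine LipschitzWith.continuous (K := 1) (LipschitzWith.of_le_add fun t s => ?_)
    have h1 : S ∩ Set.Iio t ⊆ (S ∩ Set.Iio s) ∪ Set.Ico s t := by
      rintro x ⟨hx, hxt⟩
      by_cases h : x < s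
      · exact Or.inl ⟨hx, h⟩
      · exact Or.inr ⟨not_lt.mp h, hxt⟩
    have hfs : volume (S ∩ Set.Iio s) ≠ ⊤ := measure_ne_top_of_subset Set.inter_subset_left hfin
    have h2 := (measureReal_mono h1 (measure_union_ne_top hfs (by simp))).trans
      (measureReal_union_le (μ := volume) _ _)
    have h3 : volume.real (Set.Ico s t) ≤ dist t s := by
      rw [Real.volume_real_Ico, Real.dist_eq]
      exact max_le (le_abs_self _) (abs_nonneg _)
    linarith
  have h0 : S ∩ Set.Iio 0 = ∅ := by
    ext x
    simp only [Set.mem_inter_iff, Set.mem_Iio, Set.mem_empty_iff_false, iff_false, not_and, not_lt]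
    exact fun hx => (hSN hx).1
  have h1 : S ∩ Set.Iio N = S := Set.inter_eq_left.mpr fun x hx => (hSN hx).2
  obtain ⟨t, -, ht⟩ := intermediate_value_Icc hN hcont.continuousOn
    (show m ∈ Set.Icc _ _ by simpa [h0, h1] using ⟨hm0, hm⟩)
  exact ⟨S ∩ Set.Iio t, Set.inter_subset_left, hS.inter measurableSet_Iio, ht⟩

lemma exists_disjoint_pieces {ι : Type*} {N : ℝ} (hN : 0 ≤ N) {S : Set ℝ}
    (hS : MeasurableSet S) (hSN : S ⊆ Set.Ico 0 N) (I : Finset ι) (m : ι → ℝ)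
    (hm0 : ∀ i, 0 ≤ m i) (hm : ∑ i ∈ I, m i ≤ volume.real S) :
    ∃ T : ι → Set ℝ, (∀ i, T i ⊆ S) ∧ (∀ i, MeasurableSet (T i)) ∧
      (∀ i ∈ I, volume.real (T i) = m i) ∧ (∀ i, i ∉ I → T i = ∅) ∧
      Pairwise (Function.onFun Disjoint T) := by
  classical
  induction I using Finset.induction_on with
  | empty =>
    exact ⟨fun _ => ∅, by simp, by simp, by simp, by simp, by simp [Pairwise, Function.onFun]⟩
  | insert a I ha ih =>
    rw [Finset.sum_insert ha] at hm
    obtain ⟨T, hTS, hTm, hTv, hTe, hTd⟩ := ih (by linarith [hm0 a])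
    have hfin : volume S ≠ ⊤ := (measure_lt_top_of_subset hSN (by simp)).ne
    have hUm : MeasurableSet (⋃ i ∈ I, T i) := Finset.measurableSet_biUnion _ fun i _ => hTm i
    have hU : volume.real (⋃ i ∈ I, T i) = ∑ i ∈ I, m i := by
      rw [measureReal_biUnion_finset (fun i _ j _ hij => hTd hij) (fun i _ => hTm i)
        (fun i _ => measure_ne_top_of_subset (hTS i) hfin)]
      exact Finset.sum_congr rfl hTv
    have hUS : (⋃ i ∈ I, T i) ⊆ S := by simpa using fun i _ => hTS i
    obtain ⟨R, hRS, hRm, hRv⟩ := exists_subset_measureReal_eq hN (hS.diff hUm)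
      (Set.sdiff_subset.trans hSN) (hm0 a)
      (by rw [measureReal_sdiff hUS hUm hfin, hU]; linarith)
    have hRT : ∀ i, Disjoint R (T i) := by
      intro i
      by_cases hi : i ∈ I
      · exact Set.disjoint_left.mpr fun x hx hxi =>
          (hRS hx).2 (Set.mem_biUnion (s := {i | i ∈ I}) hi hxi)
      · simp [hTe i hi]
    refine ⟨Function.update T a R, ?_, ?_, ?_, ?_, ?_⟩
    · intro i
      rcases eq_or_ne i a with rfl | h
      · simpa using hRS.trans Set.sdiff_subset
      · simpa [h] using hTS i
    · intro i
      rcases eq_or_ne i a with rfl | h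
      · simpa using hRm
      · simpa [h] using hTm i
    · intro i hi
      rcases eq_or_ne i a with rfl | h
      · simpa using hRv
      · simpa [h] using hTv i ((Finset.mem_insert.mp hi).resolve_left h)
    · intro i hi
      rw [Finset.mem_insert, not_or] at hi
      simpa [hi.1] using hTe i hi.2
    · intro i j hij
      simp only [Function.onFun]
      rcases eq_or_ne i a with rfl | h
      · simpa [hij.symm] using hRT j
      · rcases eq_or_ne j a with rfl | h'
        · simpa [h] using (hRT i).symm
        · simpa [h, h'] using hTd hij

/-- A finite family of measurable sets in an arbitrary finite measure space can be copied, up to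
the scaling factor `l`, into a set `S` of reals that is large enough. The copies are unions of
pieces of `S`, one for each nonempty atom of the family. -/
lemma exists_realization {V Y : Type*} [Finite V] [MeasurableSpace Y] (μ : Measure Y)
    [IsFiniteMeasure μ] (C : V → Set Y) (hC : ∀ v, MeasurableSet (C v)) {N : ℝ} (hN : 0 ≤ N)
    {S : Set ℝ} (hS : MeasurableSet S) (hSN : S ⊆ Set.Ico 0 N) (l : ℝ) (hl : 0 ≤ l)
    (hlS : l * μ.real Set.univ ≤ volume.real S) :
    ∃ c : V → Set ℝ, (∀ v, c v ⊆ S) ∧ (∀ v, MeasurableSet (c v)) ∧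
      (∀ v, volume.real (c v) = l * μ.real (C v)) ∧
      ∀ u v, Disjoint (C u) (C v) → Disjoint (c u) (c v) := by
  classical
  have := Fintype.ofFinite V
  have hfin : volume S ≠ ⊤ := (measure_lt_top_of_subset hSN (by simp)).ne
  let D : Finset V → Set Y := fun σ => {y | ∀ v, y ∈ C v ↔ v ∈ σ}
  have hDm : ∀ σ, MeasurableSet (D σ) := by
    intro σ
    have : D σ = ⋂ v, {y | y ∈ C v ↔ v ∈ σ} := by ext; simp [D]
    rw [this]
    refine MeasurableSet.iInter fun v => ?_
    by_cases h : v ∈ σ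
    · simpa [h] using hC v
    · simp only [h, iff_false]
      exact (hC v).compl
  have hDd : Pairwise (Function.onFun Disjoint D) := by
    intro σ τ hστ
    refine Set.disjoint_left.mpr fun y h1 h2 => hστ ?_
    ext v
    rw [← h1 v, h2 v]
  let I : Finset (Finset V) := Finset.univ.filter fun σ => (D σ).Nonempty
  have hsum : ∑ σ ∈ I, l * μ.real (D σ) ≤ volume.real S := by
    rw [← Finset.mul_sum]
    refine le_trans (mul_le_mul_of_nonneg_left ?_ hl) hlS
    exact sum_measureReal_le_measureReal_univ (fun σ _ => hDm σ)
      (fun σ _ τ _ h => hDd h)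
  obtain ⟨T, hTS, hTm, hTv, hTe, hTd⟩ := exists_disjoint_pieces hN hS hSN I _
    (fun σ => mul_nonneg hl measureReal_nonneg) hsum
  have hTv' : ∀ σ, volume.real (T σ) = l * μ.real (D σ) := by
    intro σ
    by_cases h : σ ∈ I
    · exact hTv σ h
    · have : D σ = ∅ := by simpa [I, Set.not_nonempty_iff_eq_empty] using h
      simp [hTe σ h, this]
  refine ⟨fun v => ⋃ σ ∈ Finset.univ.filter (fun σ : Finset V => v ∈ σ), T σ, ?_, ?_, ?_, ?_⟩
  · intro v
    exact Set.iUnion₂_subset fun σ _ => hTS σ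
  · intro v
    exact Finset.measurableSet_biUnion _ fun σ _ => hTm σ
  · intro v
    have hCv : C v = ⋃ σ ∈ Finset.univ.filter (fun σ : Finset V => v ∈ σ), D σ := by
      ext y
      simp only [Finset.mem_filter, Finset.mem_univ, true_and, Set.mem_iUnion, exists_prop]
      constructor
      · intro hy
        exact ⟨Finset.univ.filter fun v => y ∈ C v, by simpa using hy, by simp [D]⟩
      · rintro ⟨σ, hσ, hy⟩
        exact (hy v).mpr hσ
    rw [measureReal_biUnion_finset (fun i _ j _ hij => hTd hij) (fun i _ => hTm i)
      (fun i _ => measure_ne_top_of_subset (hTS i) hfin), hCv,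
      measureReal_biUnion_finset (fun i _ j _ hij => hDd hij) (fun i _ => hDm i), Finset.mul_sum]
    exact Finset.sum_congr rfl fun σ _ => hTv' σ
  · intro u v huv
    refine Set.disjoint_left.mpr fun x hxu hxv => ?_
    simp only [Finset.mem_filter, Finset.mem_univ, true_and, Set.mem_iUnion, exists_prop]
      at hxu hxv
    obtain ⟨σ, hσ, hxσ⟩ := hxu
    obtain ⟨τ, hτ, hxτ⟩ := hxv
    have hστ : σ = τ := by
      by_contra h
      exact Set.disjoint_left.mp (hTd h) hxσ hxτ
    subst hστ
    have hI : σ ∈ I := by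
      by_contra h
      rw [hTe σ h] at hxσ
      exact hxσ
    obtain ⟨y, hy⟩ := (Finset.mem_filter.mp hI).2
    exact Set.disjoint_left.mp huv ((hy u).mpr hσ) ((hy v).mpr hτ)

/-! ### Short odd closed walks and distance labels -/

/-- Along a walk in a fractionally `k`-colored graph, every second color set changes by at most
`k - 2`: after an even number of steps most of the initial color set is kept, after an odd number
of steps most of it is avoided. -/
lemma walk_overlap {V : Type*} {G : SimpleGraph V} {k : ℝ} {A : V → Set ℝ}
    (hA : IsFracColoring G k A) {w v : V} (p : G.Walk w v) :
    (Even p.length → 2 * volume.real (A w \ A v) ≤ p.length * (k - 2)) ∧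
      (Odd p.length → 2 * volume.real (A w ∩ A v) ≤ (p.length - 1) * (k - 2)) := by
  obtain ⟨hAk, hAm, hAv, hAd⟩ := hA
  have hfin : ∀ u, volume (A u) ≠ ⊤ := fun u => by simp [hAv u]
  have hone : ∀ u, volume.real (A u) = 1 := fun u => by simp [Measure.real, hAv u]
  induction p with
  | nil => simp
  | @cons w u v h p ih =>
    have hsplit : ∀ x y, volume.real (A x ∩ A y) + volume.real (A x \ A y) = 1 := fun x y => by
      rw [measureReal_inter_add_sdiff (hAm y) (hfin x), hone]
    have hdis := hAd w u h
    refine ⟨fun he => ?_, fun ho => ?_⟩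
    · have ho : Odd p.length := by
        rw [SimpleGraph.Walk.length_cons] at he
        grind
      have h1 := ih.2 ho
      have hk0 : (0 : ℝ) ≤ k := by
        by_contra hk
        have := hAk w
        rw [Set.Ico_eq_empty (by linarith)] at this
        have h2 := hone w
        rw [Set.subset_empty_iff.mp this] at h2
        simp at h2
      have hd1 : Disjoint (A u \ A v) (A w \ A v) :=
        (hdis.symm.mono Set.sdiff_subset Set.sdiff_subset)
      have hd2 : Disjoint (A v) ((A u \ A v) ∪ (A w \ A v)) := by
        rw [Set.disjoint_union_right]
        exact ⟨Set.disjoint_sdiff_right, Set.disjoint_sdiff_right⟩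
      have hfd : ∀ x, volume (A x \ A v) ≠ ⊤ := fun x =>
        measure_ne_top_of_subset Set.sdiff_subset (hfin x)
      have h2 : volume.real (A v ∪ ((A u \ A v) ∪ (A w \ A v))) ≤ k := by
        have h3 : A v ∪ ((A u \ A v) ∪ (A w \ A v)) ⊆ Set.Ico 0 k :=
          Set.union_subset (hAk v) (Set.union_subset (Set.sdiff_subset.trans (hAk u))
            (Set.sdiff_subset.trans (hAk w)))
        refine (measureReal_mono h3 (by simp)).trans ?_
        rw [Real.volume_real_Ico]
        simp [hk0]
      rw [measureReal_union hd2 (((hAm u).diff (hAm v)).union ((hAm w).diff (hAm v))) (hfin v)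
        (measure_union_ne_top (hfd u) (hfd w)),
        measureReal_union hd1 ((hAm w).diff (hAm v)) (hfd u) (hfd w), hone] at h2
      have h4 := hsplit u v
      rw [SimpleGraph.Walk.length_cons]
      push_cast
      linarith
    · have he : Even p.length := by
        rw [SimpleGraph.Walk.length_cons] at ho
        grind
      have h1 := ih.1 he
      have h2 : A w ∩ A v ⊆ A v \ A u := fun x hx =>
        ⟨hx.2, Set.disjoint_left.mp hdis hx.1⟩
      have h3 := measureReal_mono h2 (measure_ne_top_of_subset Set.sdiff_subset (hfin v))
      have h4 := hsplit u v
      have h5 := hsplit v u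
      rw [Set.inter_comm] at h5
      rw [SimpleGraph.Walk.length_cons]
      push_cast
      linarith

lemma no_short_odd_closed_walk {V : Type*} {G : SimpleGraph V} {k : ℝ} {A : V → Set ℝ}
    (hA : IsFracColoring G k A) (hk2 : 2 ≤ k) {D : ℕ} (hk3 : 2 * D * (k - 2) < 1) {w : V}
    (p : G.Walk w w) (hodd : Odd p.length) (hlen : p.length ≤ 4 * D + 1) : False := by
  have h := (walk_overlap hA p).2 hodd
  rw [Set.inter_self] at h
  have hone : volume.real (A w) = 1 := by simp [Measure.real, hA.2.2.1 w]
  have hl : (p.length : ℝ) ≤ 4 * D + 1 := by exact_mod_cast hlen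
  nlinarith

/-- The vertices at distance at most `2 * D` from `W` can be labeled by their nearest vertex of `W`
and their distance to it, so that adjacent labeled vertices have the same nearest vertex and
consecutive distances, and the label `none` of the other vertices is met only from distance
`2 * D`. -/
lemma exists_labels {V : Type*} {G : SimpleGraph V} {W : Set V} {D d : ℕ}
    (hd : 4 * D + 2 ≤ d) (hW : DistAtLeast G d W)
    (hno : ∀ (w : V) (p : G.Walk w w), Odd p.length → p.length ≤ 4 * D + 1 → False) :
    ∃ L : V → Option (V × ℕ), (∀ w ∈ W, L w = some (w, 0)) ∧
      (∀ v w i, L v = some (w, i) → w ∈ W) ∧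
      (∀ u v w i w' i', G.Adj u v → L u = some (w, i) → L v = some (w', i') →
        w = w' ∧ (i' = i + 1 ∨ i = i' + 1)) ∧
      (∀ u v w i, G.Adj u v → L u = some (w, i) → L v = none → i = 2 * D) := by
  classical
  let near : V → V → Prop := fun v w => w ∈ W ∧ G.Reachable w v ∧ G.dist w v ≤ 2 * D
  let L : V → Option (V × ℕ) := fun v =>
    if h : ∃ w, near v w then some (h.choose, G.dist h.choose v) else none
  have hsome : ∀ v w i, L v = some (w, i) → near v w ∧ i = G.dist w v := by
    intro v w i h
    by_cases hv : ∃ w, near v w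
    · simp only [L, hv, dif_pos, Option.some.injEq, Prod.mk.injEq] at h
      obtain ⟨rfl, rfl⟩ := h
      exact ⟨hv.choose_spec, rfl⟩
    · simp [L, hv] at h
  have hnone : ∀ v, L v = none → ∀ w, ¬ near v w := by
    intro v h w hw
    have hv : ∃ w, near v w := ⟨w, hw⟩
    simp [L, hv] at h
  have hsame : ∀ u v w w', w ∈ W → w' ∈ W → ∀ (p : G.Walk w u) (q : G.Walk w' v),
      u = v ∨ G.Adj u v → p.length ≤ 2 * D → q.length ≤ 2 * D → w = w' := by
    intro u v w w' hw hw' p q huv hp hq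
    by_contra hne
    rcases huv with rfl | huv
    · have := hW w hw w' hw' hne (p.append q.reverse)
      simp only [SimpleGraph.Walk.length_append, SimpleGraph.Walk.length_reverse] at this
      omega
    · have := hW w hw w' hw' hne ((p.concat huv).append q.reverse)
      simp only [SimpleGraph.Walk.length_append, SimpleGraph.Walk.length_reverse,
        SimpleGraph.Walk.length_concat] at this
      omega
  refine ⟨L, ?_, ?_, ?_, ?_⟩
  · intro w hw
    have hn : near w w := ⟨hw, SimpleGraph.Reachable.refl w, by simp⟩
    rcases hL : L w with _ | ⟨w', i⟩
    · exact absurd hn (hnone w hL w)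
    · obtain ⟨⟨hw', hr, hle⟩, hi⟩ := hsome w w' i hL
      obtain ⟨p, hp⟩ := hr.exists_walk_length_eq_dist
      have : w' = w := hsame w w w' w hw' hw p SimpleGraph.Walk.nil (Or.inl rfl) (by omega)
        (by simp)
      subst this
      simp [hi]
  · intro v w i h
    exact (hsome v w i h).1.1
  · intro u v w i w' i' huv hu hv
    obtain ⟨⟨hw, hr, hle⟩, hi⟩ := hsome u w i hu
    obtain ⟨⟨hw', hr', hle'⟩, hi'⟩ := hsome v w' i' hv
    obtain ⟨p, hp⟩ := hr.exists_walk_length_eq_dist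
    obtain ⟨q, hq⟩ := hr'.exists_walk_length_eq_dist
    obtain rfl := hsame u v w w' hw hw' p q (Or.inr huv) (by omega) (by omega)
    refine ⟨rfl, ?_⟩
    have h1 := G.dist_le (p.concat huv)
    have h2 := G.dist_le (q.concat huv.symm)
    rw [SimpleGraph.Walk.length_concat] at h1 h2
    by_contra hcon
    have heq : i = i' := by omega
    refine hno w ((p.concat huv).append q.reverse) ?_ ?_ <;>
    simp only [SimpleGraph.Walk.length_append, SimpleGraph.Walk.length_reverse,
        SimpleGraph.Walk.length_concat]
    · exact ⟨i, by omega⟩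
    · omega
  · intro u v w i huv hu hv
    obtain ⟨⟨hw, hr, hle⟩, hi⟩ := hsome u w i hu
    obtain ⟨p, hp⟩ := hr.exists_walk_length_eq_dist
    have h1 := G.dist_le (p.concat huv)
    rw [SimpleGraph.Walk.length_concat] at h1
    have h2 : ¬ G.dist w v ≤ 2 * D := fun h => hnone v hv w ⟨hw, ⟨p.concat huv⟩, h⟩
    omega

/-! ### The interpolation parameters -/

/-- The recursion behind the shell colorings, with `t = k - 1` and `N = k + ε`. Here `a j` and `b j`
are the fractions of the color space by which the color sets at distance `2 * j` from a precolored
vertex still deviate from the base coloring, inside and outside the precolored set respectively,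
and `x j ≤ ε` is the amount of colors used there that the base coloring does not use. -/
lemma exists_parameters {t ε N : ℝ} (ht : 1 ≤ t) (hε : 0 < ε) (hN : N = t + 1 + ε) (D : ℕ)
    (hineq : 1 / N ≤ ε * ∑ j ∈ Finset.range D, t ^ (2 * j + 1)) :
    ∃ a b x : ℕ → ℝ, a 0 = 1 ∧ a D = 0 ∧ (∀ j, 0 ≤ a j ∧ a j ≤ 1) ∧ (∀ j, 0 ≤ b j ∧ b j ≤ 1) ∧
      (∀ j, a (j + 1) ≤ a j) ∧ (∀ j, b (j + 1) ≤ b j) ∧ (∀ j, 0 ≤ x j ∧ x j ≤ ε) ∧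
      (∀ j, N * x j = (N - 1) * b j - t * a j) ∧ (∀ j, a j = (N - 1) * t * b (j + 1)) := by
  have ht0 : 0 < t := by linarith
  have hN0 : 0 < N := by linarith
  have hN1 : 1 ≤ N - 1 := by linarith
  have hNt : 1 ≤ (N - 1) * t := by nlinarith
  let a : ℕ → ℝ := fun j => Nat.rec 1 (fun _ y => max 0 (y / t ^ 2 - ε * N / t)) j
  have ha0 : a 0 = 1 := rfl
  have has : ∀ j, a (j + 1) = max 0 (a j / t ^ 2 - ε * N / t) := fun j => rfl
  have hann : ∀ j, 0 ≤ a j := by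
    intro j
    cases j with
    | zero => simp [ha0]
    | succ j => rw [has]; exact le_max_left _ _
  have hdec : ∀ j, a (j + 1) ≤ a j := by
    intro j
    rw [has]
    refine max_le (hann j) ?_
    have h1 : a j / t ^ 2 ≤ a j := div_le_self (hann j) (by nlinarith)
    have h2 : 0 ≤ ε * N / t := by positivity
    linarith
  have hale : ∀ j, a j ≤ 1 := by
    intro j
    induction j with
    | zero => simp [ha0]
    | succ j ih => exact (hdec j).trans ih
  have hclosed : ∀ j, a j * t ^ (2 * j) ≤
      max 0 (1 - ε * N * ∑ i ∈ Finset.range j, t ^ (2 * i + 1)) := by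
    intro j
    induction j with
    | zero => simp [ha0]
    | succ j ih =>
      have hp : 0 < t ^ (2 * j) := by positivity
      have h1 : a (j + 1) * t ^ (2 * (j + 1)) =
          max 0 (a j * t ^ (2 * j) - ε * N * t ^ (2 * j + 1)) := by
        rw [has, max_mul_of_nonneg _ _ (by positivity), zero_mul]
        congr 1
        field_simp
        ring
      rw [h1, Finset.sum_range_succ]
      have hq : 0 ≤ ε * N * t ^ (2 * j + 1) := by positivity
      refine max_le (le_max_left _ _) ?_
      rcases le_max_iff.mp ih with h | h
      · exact le_max_of_le_left (by linarith)
      · exact le_max_of_le_right (by linarith)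
  have haD : a D = 0 := by
    have h1 := hclosed D
    rw [max_eq_left] at h1
    · refine le_antisymm ?_ (hann D)
      have hp : 0 < t ^ (2 * D) := by positivity
      by_contra h
      push Not at h
      nlinarith [mul_pos h hp]
    · rw [div_le_iff₀ hN0] at hineq
      linarith
  -- The values at `0` are chosen so that distance `0` obeys the same equations.
  let b : ℕ → ℝ := fun j => Nat.casesOn j 1 fun i => a i / ((N - 1) * t)
  have hb0 : b 0 = 1 := rfl
  have hbs : ∀ j, b (j + 1) = a j / ((N - 1) * t) := fun j => rfl
  have hNt0 : 0 < (N - 1) * t := by linarith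
  have hble : ∀ j, b j ≤ 1 := by
    intro j
    cases j with
    | zero => simp [hb0]
    | succ j => rw [hbs, div_le_one hNt0]; linarith [hale j]
  refine ⟨a, b, fun j => ((N - 1) * b j - t * a j) / N, ha0, haD, fun j => ⟨hann j, hale j⟩,
    fun j => ⟨?_, hble j⟩, hdec, ?_, ?_, ?_, ?_⟩
  · cases j with
    | zero => simp [hb0]
    | succ j => rw [hbs]; exact div_nonneg (hann j) hNt0.le
  · intro j
    cases j with
    | zero => simpa [hb0] using hble 1
    | succ j => rw [hbs (j + 1), hbs j]; exact div_le_div_of_nonneg_right (hdec j) hNt0.le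
  · intro j
    rw [div_le_iff₀ hN0]
    refine ⟨div_nonneg ?_ hN0.le, ?_⟩
    · cases j with
      | zero => rw [hb0, ha0]; linarith
      | succ j =>
        have h1 : (N - 1) * b (j + 1) = a j / t := by
          rw [hbs]
          have : N - 1 ≠ 0 := by linarith
          field_simp
        have h2 : t * a (j + 1) ≤ a j / t := by
          rw [has, mul_max_of_nonneg _ _ ht0.le, mul_zero]
          refine max_le (div_nonneg (hann j) ht0.le) ?_
          have : t * (a j / t ^ 2 - ε * N / t) = a j / t - ε * N := by field_simp
          rw [this]
          nlinarith
        linarith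
    · cases j with
      | zero => rw [hb0, ha0]; nlinarith
      | succ j =>
        have h1 : (N - 1) * b (j + 1) = a j / t := by
          rw [hbs]
          have : N - 1 ≠ 0 := by linarith
          field_simp
        have h2 : a j / t - ε * N ≤ t * a (j + 1) := by
          have : t * (a j / t ^ 2 - ε * N / t) = a j / t - ε * N := by field_simp
          rw [← this, has]
          exact mul_le_mul_of_nonneg_left (le_max_right _ _) ht0.le
        linarith
  · intro j
    field_simp
  · intro j
    rw [hbs]
    field_simp

/-! ### Mixing a coloring scheme with the precoloring -/

/-- Each atom of the precoloring, indexed by the set `s` of precolored vertices whose sets contain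
it, receives a scaled copy of the family `C s`. Vertex `v` then gets measure `m` if every `C s v`
has measure `m`; if that measure depends only on whether `w ∈ s`, then it is averaged with weights
`1` and `N - 1`, the measures of `P w` and of its complement. -/
lemma exists_mixture {V Y : Type*} [Finite V] [MeasurableSpace Y] (μ : Measure Y)
    [IsFiniteMeasure μ] {N : ℝ} (hN : 0 < N) (hμ : μ.real Set.univ = N) {W : Set V}
    {P : V → Set ℝ} (hP : IsFracPrecoloring N W P) (C : Set V → V → Set Y)
    (hC : ∀ s v, MeasurableSet (C s v)) :
    ∃ c : V → Set ℝ, (∀ v, c v ⊆ Set.Ico 0 N) ∧ (∀ v, MeasurableSet (c v)) ∧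
      (∀ u v, (∀ s, Disjoint (C s u) (C s v)) → Disjoint (c u) (c v)) ∧
      (∀ v, ∀ w ∈ W, (∀ s, w ∈ s → C s v = ∅) → Disjoint (P w) (c v)) ∧
      (∀ v m, (∀ s, μ.real (C s v) = m) → volume.real (c v) = m) ∧
      (∀ v, ∀ w ∈ W, ∀ m m', (∀ s, w ∈ s → μ.real (C s v) = m) →
        (∀ s, w ∉ s → μ.real (C s v) = m') → N * volume.real (c v) = m + (N - 1) * m') := by
  classical
  have := Fintype.ofFinite V
  let S : Set V → Set ℝ := fun s => {x | x ∈ Set.Ico 0 N ∧ ∀ w ∈ W, (x ∈ P w ↔ w ∈ s)} ∩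
    {_x | s ⊆ W}
  have hSN : ∀ s, S s ⊆ Set.Ico 0 N := fun s x hx => hx.1.1
  have hSm : ∀ s, MeasurableSet (S s) := by
    intro s
    have h1 : {x | x ∈ Set.Ico 0 N ∧ ∀ w ∈ W, (x ∈ P w ↔ w ∈ s)} =
        Set.Ico 0 N ∩ ⋂ w ∈ W, {x | x ∈ P w ↔ w ∈ s} := by
      ext; simp
    refine MeasurableSet.inter ?_ (MeasurableSet.const _)
    rw [h1]
    refine measurableSet_Ico.inter (MeasurableSet.biInter W.toFinite.countable fun w hw => ?_)
    by_cases h : w ∈ s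
    · simpa [h] using (hP w hw).2.1
    · simp only [h, iff_false]
      exact (hP w hw).2.1.compl
  have hSd : Pairwise (Function.onFun Disjoint S) := by
    intro s s' hss
    refine Set.disjoint_left.mpr fun x h1 h2 => hss ?_
    ext w
    constructor
    · intro hw
      exact (h2.1.2 w (h1.2 hw)).mp ((h1.1.2 w (h1.2 hw)).mpr hw)
    · intro hw
      exact (h1.1.2 w (h2.2 hw)).mp ((h2.1.2 w (h2.2 hw)).mpr hw)
  have hfin : ∀ s, volume (S s) ≠ ⊤ := fun s => (measure_lt_top_of_subset (hSN s) (by simp)).ne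
  have hSx : ∀ x ∈ Set.Ico 0 N, x ∈ S {w | w ∈ W ∧ x ∈ P w} := by
    intro x hx
    refine ⟨⟨hx, fun w hw => ?_⟩, fun w hw => hw.1⟩
    simp [hw]
  have hStot : ∑ s, volume.real (S s) = N := by
    rw [← measureReal_iUnion_fintype hSd hSm hfin]
    have : ⋃ s, S s = Set.Ico 0 N := by
      refine subset_antisymm (Set.iUnion_subset hSN) fun x hx => Set.mem_iUnion.mpr ⟨_, hSx x hx⟩
    rw [this, Real.volume_real_Ico_of_le hN.le, sub_zero]
  have hSw : ∀ w ∈ W, ∑ s, (if w ∈ s then volume.real (S s) else 0) = 1 := by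
    intro w hw
    rw [← Finset.sum_filter, ← measureReal_biUnion_finset (fun i _ j _ hij => hSd hij)
      (fun i _ => hSm i) (fun i _ => hfin i)]
    have : ⋃ s ∈ Finset.univ.filter (fun s : Set V => w ∈ s), S s = P w := by
      ext x
      simp only [Finset.mem_filter, Finset.mem_univ, true_and, Set.mem_iUnion, exists_prop]
      constructor
      · rintro ⟨s, hs, hx⟩
        exact (hx.1.2 w hw).mpr hs
      · intro hx
        exact ⟨{w | w ∈ W ∧ x ∈ P w}, ⟨hw, hx⟩, hSx x ((hP w hw).1 hx)⟩
    rw [this, Measure.real, (hP w hw).2.2, ENNReal.toReal_one]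
  have hex := fun s => exists_realization μ (C s) (hC s) hN.le (hSm s) (hSN s)
    (volume.real (S s) / N) (div_nonneg measureReal_nonneg hN.le)
    (by rw [hμ, div_mul_cancel₀ _ hN.ne'])
  choose c hcS hcm hcv hcd using hex
  have hcd' : ∀ s s' u v, s ≠ s' → Disjoint (c s u) (c s' v) := fun s s' u v h =>
    (hSd h).mono (hcS s u) (hcS s' v)
  have hvol : ∀ v, volume.real (⋃ s, c s v) = ∑ s, volume.real (S s) / N * μ.real (C s v) := by
    intro v
    rw [measureReal_iUnion_fintype (fun s s' h => hcd' s s' v v h) (fun s => hcm s v)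
      (fun s => measure_ne_top_of_subset (hcS s v) (hfin s))]
    exact Finset.sum_congr rfl fun s _ => hcv s v
  refine ⟨fun v => ⋃ s, c s v, ?_, ?_, ?_, ?_, ?_, ?_⟩
  · exact fun v => Set.iUnion_subset fun s => (hcS s v).trans (hSN s)
  · exact fun v => MeasurableSet.iUnion fun s => hcm s v
  · intro u v h
    simp only [Set.disjoint_iUnion_left, Set.disjoint_iUnion_right]
    intro s s'
    by_cases hs : s' = s
    · subst hs
      exact hcd _ u v (h _)
    · exact hcd' _ _ u v hs
  · intro v w hw h
    simp only [Set.disjoint_iUnion_right]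
    intro s
    by_cases hs : w ∈ s
    · have h1 : Disjoint (c s v) (c s v) := hcd s v v (by simp [h s hs])
      rw [disjoint_self] at h1
      rw [h1]
      exact disjoint_bot_right
    · exact Set.disjoint_left.mpr fun x hx hxs => hs (((hcS s v hxs).1.2 w hw).mp hx)
  · intro v m h
    simp only [hvol, h]
    rw [← Finset.sum_mul, ← Finset.sum_div, hStot, div_self hN.ne', one_mul]
  · intro v w hw m m' h h'
    simp only [hvol]
    have h1 : ∀ s, volume.real (S s) / N * μ.real (C s v) =
        (m' * volume.real (S s) + (m - m') * (if w ∈ s then volume.real (S s) else 0)) / N := by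
      intro s
      by_cases hs : w ∈ s
      · rw [h s hs, if_pos hs]; ring
      · rw [h' s hs, if_neg hs]; ring
    simp only [h1]
    rw [← Finset.sum_div, Finset.sum_add_distrib, ← Finset.mul_sum, ← Finset.mul_sum, hStot,
      hSw w hw]
    field_simp
    ring

/-! ### The color sets around a precolored vertex -/

/-- Color set, as a subset of `[0, k + ε) × [0, 1)`, of a vertex with base color set `A` at even
distance from a precolored vertex, over the points of the precolored set: all of `A`, the fraction
`a` of the other base colors, and `x` new colors. -/
def evenIn (k a x : ℝ) (A : Set ℝ) : Set (ℝ × ℝ) :=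
  A ×ˢ Set.Ico 0 1 ∪ (Set.Ico 0 k \ A) ×ˢ Set.Ico 0 a ∪ Set.Ico k (k + x) ×ˢ Set.Ico 0 1

/-- As `evenIn`, over the points outside the precolored set: `A` without a fraction `b`, and `x` new
colors. -/
def evenOut (k b x : ℝ) (A : Set ℝ) : Set (ℝ × ℝ) :=
  A ×ˢ Set.Ico b 1 ∪ Set.Ico k (k + x) ×ˢ Set.Ico 0 1

/-- As `evenIn`, at odd distance: `A` without a fraction `a`. -/
def oddIn (a : ℝ) (A : Set ℝ) : Set (ℝ × ℝ) :=
  A ×ˢ Set.Ico a 1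

/-- As `evenOut`, at odd distance: all of `A` and a fraction `b` of the other base colors. -/
def oddOut (k b : ℝ) (A : Set ℝ) : Set (ℝ × ℝ) :=
  A ×ˢ Set.Ico 0 1 ∪ (Set.Ico 0 k \ A) ×ˢ Set.Ico 0 b

/-- Lebesgue measure on the auxiliary color space `[0, N) × [0, 1)`. -/
noncomputable def boxMeasure (N : ℝ) : Measure (ℝ × ℝ) :=
  volume.restrict (Set.Ico 0 N ×ˢ Set.Ico 0 1)

instance (N : ℝ) : IsFiniteMeasure (boxMeasure N) := by
  refine ⟨?_⟩
  rw [boxMeasure, Measure.restrict_apply_univ, Measure.volume_eq_prod, Measure.prod_prod]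
  simp

lemma boxMeasure_rect {N : ℝ} {s t : Set ℝ} (hs : s ⊆ Set.Ico 0 N) (ht : t ⊆ Set.Ico 0 1) :
    (boxMeasure N).real (s ×ˢ t) = volume.real s * volume.real t := by
  rw [boxMeasure, measureReal_restrict_apply' (measurableSet_Ico.prod measurableSet_Ico),
    Set.inter_eq_left.mpr (Set.prod_mono hs ht), Measure.volume_eq_prod, measureReal_prod_prod]

lemma boxMeasure_univ {N : ℝ} (hN : 0 ≤ N) : (boxMeasure N).real Set.univ = N := by
  have h := boxMeasure_rect (N := N) (subset_refl (Set.Ico 0 N)) (subset_refl (Set.Ico 0 1))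
  rw [Real.volume_real_Ico_of_le hN, Real.volume_real_Ico_of_le zero_le_one] at h
  rw [boxMeasure, measureReal_restrict_apply_self] at h
  rw [boxMeasure, measureReal_restrict_apply_univ, h]
  ring

section Measures

variable {k N a b x : ℝ} {A : Set ℝ}

lemma measurableSet_evenIn (hA : MeasurableSet A) : MeasurableSet (evenIn k a x A) :=
  ((hA.prod measurableSet_Ico).union ((measurableSet_Ico.diff hA).prod measurableSet_Ico)).union
    (measurableSet_Ico.prod measurableSet_Ico)

lemma measurableSet_evenOut (hA : MeasurableSet A) : MeasurableSet (evenOut k b x A) :=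
  (hA.prod measurableSet_Ico).union (measurableSet_Ico.prod measurableSet_Ico)

lemma measurableSet_oddIn (hA : MeasurableSet A) : MeasurableSet (oddIn a A) :=
  hA.prod measurableSet_Ico

lemma measurableSet_oddOut (hA : MeasurableSet A) : MeasurableSet (oddOut k b A) :=
  (hA.prod measurableSet_Ico).union ((measurableSet_Ico.diff hA).prod measurableSet_Ico)

lemma measure_Ico_diff (hk : 0 ≤ k) (hA : MeasurableSet A) (hAk : A ⊆ Set.Ico 0 k)
    (hA1 : volume.real A = 1) : volume.real (Set.Ico 0 k \ A) = k - 1 := by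
  rw [measureReal_sdiff hAk hA (by simp), hA1, Real.volume_real_Ico_of_le hk, sub_zero]

lemma boxMeasure_oddIn (hAN : A ⊆ Set.Ico 0 N) (hA1 : volume.real A = 1) (ha0 : 0 ≤ a)
    (ha1 : a ≤ 1) : (boxMeasure N).real (oddIn a A) = 1 - a := by
  rw [oddIn, boxMeasure_rect hAN (Set.Ico_subset_Ico_left ha0), hA1,
    Real.volume_real_Ico_of_le ha1, one_mul]

lemma boxMeasure_oddOut (hk : 0 ≤ k) (hkN : k ≤ N) (hA : MeasurableSet A)
    (hAk : A ⊆ Set.Ico 0 k) (hA1 : volume.real A = 1) (hb0 : 0 ≤ b) (hb1 : b ≤ 1) :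
    (boxMeasure N).real (oddOut k b A) = 1 + (k - 1) * b := by
  have hkN' : Set.Ico 0 k ⊆ Set.Ico 0 N := Set.Ico_subset_Ico_right hkN
  rw [oddOut, measureReal_union (Set.disjoint_prod.mpr (Or.inl Set.disjoint_sdiff_right))
    ((measurableSet_Ico.diff hA).prod measurableSet_Ico),
    boxMeasure_rect (hAk.trans hkN') subset_rfl,
    boxMeasure_rect (Set.sdiff_subset.trans hkN') (Set.Ico_subset_Ico_right hb1), hA1,
    Real.volume_real_Ico_of_le zero_le_one, Real.volume_real_Ico_of_le hb0,
    measure_Ico_diff hk hA hAk hA1]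
  ring

lemma disjoint_new_colors : Disjoint (Set.Ico 0 k) (Set.Ico k (k + x)) :=
  Set.disjoint_left.mpr fun _ h1 h2 => absurd h2.1 (not_le.mpr h1.2)

lemma boxMeasure_evenIn (hk : 0 ≤ k) (hx : 0 ≤ x) (hkN : k + x ≤ N) (hA : MeasurableSet A)
    (hAk : A ⊆ Set.Ico 0 k) (hA1 : volume.real A = 1) (ha0 : 0 ≤ a) (ha1 : a ≤ 1) :
    (boxMeasure N).real (evenIn k a x A) = 1 + (k - 1) * a + x := by
  have hd : Disjoint (oddOut k a A) (Set.Ico k (k + x) ×ˢ Set.Ico (0 : ℝ) 1) := by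
    rw [oddOut, Set.disjoint_union_left]
    exact ⟨Set.disjoint_prod.mpr (Or.inl (disjoint_new_colors.mono_left hAk)),
      Set.disjoint_prod.mpr (Or.inl (disjoint_new_colors.mono_left Set.sdiff_subset))⟩
  have h : evenIn k a x A = oddOut k a A ∪ Set.Ico k (k + x) ×ˢ Set.Ico 0 1 := rfl
  rw [h, measureReal_union hd (measurableSet_Ico.prod measurableSet_Ico),
    boxMeasure_oddOut hk (by linarith) hA hAk hA1 ha0 ha1,
    boxMeasure_rect (Set.Ico_subset_Ico hk hkN) subset_rfl,
    Real.volume_real_Ico_of_le zero_le_one, Real.volume_real_Ico_of_le (by linarith)]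
  ring

lemma boxMeasure_evenOut (hk : 0 ≤ k) (hx : 0 ≤ x) (hkN : k + x ≤ N)
    (hAk : A ⊆ Set.Ico 0 k) (hA1 : volume.real A = 1) (hb0 : 0 ≤ b) (hb1 : b ≤ 1) :
    (boxMeasure N).real (evenOut k b x A) = 1 - b + x := by
  have hAN : A ⊆ Set.Ico 0 N := hAk.trans (Set.Ico_subset_Ico_right (by linarith))
  have h : evenOut k b x A = oddIn b A ∪ Set.Ico k (k + x) ×ˢ Set.Ico 0 1 := rfl
  have hd : Disjoint (oddIn b A) (Set.Ico k (k + x) ×ˢ Set.Ico (0 : ℝ) 1) :=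
    Set.disjoint_prod.mpr (Or.inl (disjoint_new_colors.mono_left hAk))
  rw [h, measureReal_union hd (measurableSet_Ico.prod measurableSet_Ico), boxMeasure_oddIn hAN hA1 hb0 hb1,
    boxMeasure_rect (Set.Ico_subset_Ico hk hkN) subset_rfl,
    Real.volume_real_Ico_of_le zero_le_one, Real.volume_real_Ico_of_le (by linarith)]
  ring

end Measures

lemma disjoint_oddIn_evenIn {k a a' x : ℝ} {A B : Set ℝ} (hA : A ⊆ Set.Ico 0 k)
    (hAB : Disjoint A B) (ha : a' ≤ a) : Disjoint (oddIn a A) (evenIn k a' x B) := by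
  refine Set.disjoint_left.mpr ?_
  rintro ⟨z, τ⟩ ⟨hz, hτ⟩ ((⟨h1, h2⟩ | ⟨h1, h2⟩) | ⟨h1, h2⟩)
  · exact Set.disjoint_left.mp hAB hz h1
  · exact absurd h2.2 (not_lt.mpr (ha.trans hτ.1))
  · exact absurd h1.1 (not_le.mpr (hA hz).2)

lemma disjoint_oddOut_evenOut {k b b' x : ℝ} {A B : Set ℝ} (hA : A ⊆ Set.Ico 0 k)
    (hAB : Disjoint A B) (hb : b ≤ b') : Disjoint (oddOut k b A) (evenOut k b' x B) := by
  refine Set.disjoint_left.mpr ?_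
  rintro ⟨z, τ⟩ (⟨hz, hτ⟩ | ⟨hz, hτ⟩) (⟨h1, h2⟩ | ⟨h1, h2⟩)
  · exact Set.disjoint_left.mp hAB hz h1
  · exact absurd h1.1 (not_le.mpr (hA hz).2)
  · exact absurd hτ.2 (not_lt.mpr (hb.trans h2.1))
  · exact absurd h1.1 (not_le.mpr hz.1.2)

open Classical in
/-- Color set of a vertex with base color set `A` at distance `i` from the precolored vertex `w`,
over the atom `s` of the precoloring. -/
noncomputable def shellSet {V : Type*} (k : ℝ) (a b x : ℕ → ℝ) (s : Set V) (w : V) (i : ℕ)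
    (A : Set ℝ) : Set (ℝ × ℝ) :=
  if Even i then
    if w ∈ s then evenIn k (a (i / 2)) (x (i / 2)) A else evenOut k (b (i / 2)) (x (i / 2)) A
  else
    if w ∈ s then oddIn (a (i / 2)) A else oddOut k (b (i / 2 + 1)) A

lemma disjoint_shellSet_succ {V : Type*} {k : ℝ} {a b x : ℕ → ℝ} (ha : ∀ j, a (j + 1) ≤ a j)
    (hb : ∀ j, b (j + 1) ≤ b j) (s : Set V) (w : V) (i : ℕ) {A B : Set ℝ}
    (hA : A ⊆ Set.Ico 0 k) (hB : B ⊆ Set.Ico 0 k) (hAB : Disjoint A B) :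
    Disjoint (shellSet k a b x s w i A) (shellSet k a b x s w (i + 1) B) := by
  rcases Nat.even_or_odd' i with ⟨j, rfl | rfl⟩
  · have h1 : Even (2 * j) := even_two_mul j
    have h2 : ¬ Even (2 * j + 1) := by simp
    have h3 : 2 * j / 2 = j := by omega
    have h4 : (2 * j + 1) / 2 = j := by omega
    by_cases hw : w ∈ s <;> simp only [shellSet, h1, h2, h3, h4, hw, if_true, if_false]
    · exact (disjoint_oddIn_evenIn hB hAB.symm le_rfl).symm
    · exact (disjoint_oddOut_evenOut hB hAB.symm (hb j)).symm
  · have h1 : ¬ Even (2 * j + 1) := by simp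
    have h2 : Even (2 * j + 1 + 1) := ⟨j + 1, by omega⟩
    have h3 : (2 * j + 1 + 1) / 2 = j + 1 := by omega
    have h4 : (2 * j + 1) / 2 = j := by omega
    by_cases hw : w ∈ s <;> simp only [shellSet, h1, h2, h3, h4, hw, if_true, if_false]
    · exact disjoint_oddIn_evenIn hA hAB (ha j)
    · exact disjoint_oddOut_evenOut hA hAB le_rfl

/-- At distance `2 * D`, where `a D = 0`, only colors of the own base set and new colors are used,
so the base coloring may continue from there. -/
lemma disjoint_shellSet_base {V : Type*} {k : ℝ} {a b x : ℕ → ℝ} {D : ℕ} (haD : a D = 0)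
    (hb : 0 ≤ b D) (s : Set V) (w : V) {A B : Set ℝ} (hB : B ⊆ Set.Ico 0 k)
    (hAB : Disjoint A B) :
    Disjoint (shellSet k a b x s w (2 * D) A) (B ×ˢ Set.Ico 0 1) := by
  have h1 : Even (2 * D) := even_two_mul D
  have h3 : 2 * D / 2 = D := by omega
  by_cases hw : w ∈ s <;> simp only [shellSet, h1, h3, hw, if_true, if_false]
  · exact (disjoint_oddIn_evenIn hB hAB.symm haD.le).symm
  · refine ((disjoint_oddOut_evenOut hB hAB.symm hb).mono_left ?_).symm
    exact Set.subset_union_left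

/-- Extension theorem for distances congruent to two mod four. -/
theorem extend_d2 (d : ℕ) (hd : 6 ≤ d) (hd4 : d % 4 = 2) (k : ℚ) (ε : ℝ) (hε : 0 < ε)
    (hk2 : 2 ≤ (k : ℝ)) (hk3 : (k : ℝ) < 2 + 1 / (2 * ((d / 4 : ℕ) : ℝ)))
    (hineq : 1 / ((k : ℝ) + ε) ≤
      ε * ∑ j ∈ Finset.range (d / 4), ((k : ℝ) - 1) ^ (2 * j + 1))
    (V : Type) [Fintype V] (G : SimpleGraph V) (W : Set V)
    (hG : FracColorable G (k : ℝ)) (hW : DistAtLeast G d W)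
    (P : V → Set ℝ) (hP : IsFracPrecoloring ((k : ℝ) + ε) W P) :
    ∃ c, IsFracColoring G ((k : ℝ) + ε) c ∧ ∀ w ∈ W, c w = P w := by
  classical
  obtain ⟨A, hA⟩ := hG
  have hA' := hA
  obtain ⟨hAk, hAm, hAv, hAd⟩ := hA'
  set κ : ℝ := (k : ℝ) with hκ
  set N : ℝ := κ + ε with hN
  set D : ℕ := d / 4 with hD
  have hD0 : (0 : ℝ) < D := by
    have : 0 < D := by omega
    exact_mod_cast this
  have hk3' : 2 * D * (κ - 2) < 1 := by
    have h1 : κ - 2 < 1 / (2 * (D : ℝ)) := by linarith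
    rw [lt_div_iff₀ (by linarith)] at h1
    linarith
  have hN0 : 0 < N := by linarith
  have hA1 : ∀ v, volume.real (A v) = 1 := fun v => by simp [Measure.real, hAv v]
  have hAN : ∀ v, A v ⊆ Set.Ico 0 N := fun v =>
    (hAk v).trans (Set.Ico_subset_Ico_right (by linarith))
  obtain ⟨L, hLW, hLin, hLadj, hLfar⟩ := exists_labels (D := D) (by omega) hW
    fun w p h1 h2 => no_short_odd_closed_walk hA hk2 hk3' p h1 h2
  obtain ⟨a, b, x, ha0, haD, ha, hb, hadec, hbdec, hx, heven, hodd⟩ :=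
    exists_parameters (t := κ - 1) (by linarith) hε (by linarith : N = κ - 1 + 1 + ε) D hineq
  let C : Set V → V → Set (ℝ × ℝ) := fun s v =>
    match L v with
    | none => A v ×ˢ Set.Ico 0 1
    | some (w, i) => shellSet κ a b x s w i (A v)
  have hCnone : ∀ s v, L v = none → C s v = A v ×ˢ Set.Ico 0 1 := fun s v h => by
    simp only [C, h]
  have hCsome : ∀ s v w i, L v = some (w, i) → C s v = shellSet κ a b x s w i (A v) :=
    fun s v w i h => by simp only [C, h]
  have hCm : ∀ s v, MeasurableSet (C s v) := by
    intro s v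
    rcases hL : L v with _ | ⟨w, i⟩
    · rw [hCnone s v hL]
      exact (hAm v).prod measurableSet_Ico
    · rw [hCsome s v w i hL, shellSet]
      split_ifs
      · exact measurableSet_evenIn (hAm v)
      · exact measurableSet_evenOut (hAm v)
      · exact measurableSet_oddIn (hAm v)
      · exact measurableSet_oddOut (hAm v)
  obtain ⟨c, hcN, hcm, hcd, hcP, hcv, hcv'⟩ := exists_mixture (boxMeasure N) hN0
    (boxMeasure_univ hN0.le) hP C hCm
  have hCd : ∀ u v, G.Adj u v → Disjoint (c u) (c v) := by
    intro u v huv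
    refine hcd u v fun s => ?_
    have hAB := hAd u v huv
    rcases hu : L u with _ | ⟨w, i⟩ <;> rcases hv : L v with _ | ⟨w', i'⟩
    · rw [hCnone s u hu, hCnone s v hv]
      exact Set.disjoint_prod.mpr (Or.inl hAB)
    · obtain rfl := hLfar v u w' i' huv.symm hv hu
      rw [hCnone s u hu, hCsome s v _ _ hv]
      exact (disjoint_shellSet_base haD (hb D).1 s w' (hAk u) hAB.symm).symm
    · obtain rfl := hLfar u v w i huv hu hv
      rw [hCnone s v hv, hCsome s u _ _ hu]
      exact disjoint_shellSet_base haD (hb D).1 s w (hAk v) hAB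
    · obtain ⟨rfl, rfl | rfl⟩ := hLadj u v w i w' i' huv hu hv
      · rw [hCsome s u _ _ hu, hCsome s v _ _ hv]
        exact disjoint_shellSet_succ hadec hbdec s w i (hAk u) (hAk v) hAB
      · rw [hCsome s u _ _ hu, hCsome s v _ _ hv]
        exact (disjoint_shellSet_succ hadec hbdec s w i' (hAk v) (hAk u) hAB.symm).symm
  have hvol : ∀ v, volume.real (c v) = 1 := by
    intro v
    have hk0 : 0 ≤ κ := by linarith
    rcases hL : L v with _ | ⟨w, i⟩
    · refine hcv v 1 fun s => ?_
      rw [hCnone s v hL, boxMeasure_rect (hAN v) subset_rfl, hA1,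
        Real.volume_real_Ico_of_le zero_le_one]
      ring
    · have hxN : ∀ j, κ + x j ≤ N := fun j => by linarith [(hx j).2]
      suffices h : N * volume.real (c v) = N by
        exact mul_left_cancel₀ hN0.ne' (h.trans (mul_one N).symm)
      by_cases hi : Even i
      · rw [hcv' v w (hLin v w i hL) (1 + (κ - 1) * a (i / 2) + x (i / 2))
          (1 - b (i / 2) + x (i / 2)) ?_ ?_]
        · linear_combination heven (i / 2)
        · intro s hs
          rw [hCsome s v w i hL, shellSet, if_pos hi, if_pos hs]
          exact boxMeasure_evenIn hk0 (hx _).1 (hxN _) (hAm v) (hAk v) (hA1 v) (ha _).1 (ha _).2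
        · intro s hs
          rw [hCsome s v w i hL, shellSet, if_pos hi, if_neg hs]
          exact boxMeasure_evenOut hk0 (hx _).1 (hxN _) (hAk v) (hA1 v) (hb _).1 (hb _).2
      · rw [hcv' v w (hLin v w i hL) (1 - a (i / 2)) (1 + (κ - 1) * b (i / 2 + 1)) ?_ ?_]
        · linear_combination -hodd (i / 2)
        · intro s hs
          rw [hCsome s v w i hL, shellSet, if_neg hi, if_pos hs]
          exact boxMeasure_oddIn (hAN v) (hA1 v) (ha _).1 (ha _).2
        · intro s hs
          rw [hCsome s v w i hL, shellSet, if_neg hi, if_neg hs]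
          exact boxMeasure_oddOut hk0 (by linarith) (hAm v) (hAk v) (hA1 v) (hb _).1 (hb _).2
  have hWP : ∀ w ∈ W, ∀ v, G.Adj w v → Disjoint (P w) (c v) ∧ v ∉ W := by
    intro w hw v hwv
    have hvW : v ∉ W := fun hv => by
      have := (hLadj w v w 0 v 0 hwv (hLW w hw) (hLW v hv)).2
      omega
    refine ⟨hcP v w hw fun s hs => ?_, hvW⟩
    rcases hL : L v with _ | ⟨w', i⟩
    · have := hLfar w v w 0 hwv (hLW w hw) hL
      omega
    · obtain ⟨rfl, hi⟩ := hLadj w v w 0 w' i hwv (hLW w hw) hL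
      obtain rfl : i = 1 := by omega
      rw [hCsome s v w 1 hL, shellSet, if_neg (by simp), if_pos hs, oddIn]
      simp [ha0]
  -- The set constructed for `w ∈ W` need not be `P w`, but it can be replaced by `P w`, since all
  -- neighbors of `w` avoid `P w` entirely.
  refine ⟨fun v => if v ∈ W then P v else c v, ⟨?_, ?_, ?_, ?_⟩, fun w hw => if_pos hw⟩
  · intro v
    by_cases hv : v ∈ W
    · simpa [hv] using (hP v hv).1
    · simpa [hv] using hcN v
  · intro v
    by_cases hv : v ∈ W
    · simpa [hv] using (hP v hv).2.1
    · simpa [hv] using hcm v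
  · intro v
    by_cases hv : v ∈ W
    · simpa [hv] using (hP v hv).2.2
    · have h1 := hvol v
      rw [Measure.real, ENNReal.toReal_eq_one_iff] at h1
      simpa [hv] using h1
  · intro u v huv
    by_cases hu : u ∈ W
    · obtain ⟨h1, h2⟩ := hWP u hu v huv
      simpa [hu, h2] using h1
    · by_cases hv : v ∈ W
      · simpa [hu, hv] using (hWP v hv u huv.symm).1.symm
      · simpa [hu, hv] using hCd u v huv
end

section
/- Let k be a positive rational with k < 3 and ε a positive real such that ε ≥ 1/(k+ε). If G is a fractionally k-colorable graph and W is a subset of its vertex set whose vertices are at pairwise graph distance at least six, then any fractional (k+ε)-precoloring of W can be extended to a fractional (k+ε)-coloring of G. -/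
/-!
Write `r = k + ε`. The precolored sets `P w` cut `[0, r)` into finitely many atoms. Inside every
atom one places a copy, scaled by `1 / r`, of the given `k`-coloring, leaving an `ε / r` fraction
of the atom unused (`exists_base`). This yields a *base coloring* `b` of `G` by subsets of `[0, r)`
together with a set `E` of measure `ε` used by no vertex, such that each `b v` meets each `P w` in
measure exactly `1 / r`, and `E` meets `P w` in measure `ε / r`.

The base coloring is then changed only within distance two of `W`, independently around each `w`
(`exists_local`). Choose `Y ⊆ b w \ P w` of the same measure as `E ∩ P w`.
* `w` receives `P w`.
* A neighbor `v` of `w` receives a subset of measure one of `(b v \ P w) ∪ (E \ P w) ∪ Y`. The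
  three parts are disjoint, since `b v` misses `b w ⊇ Y`, and their total measure is
  `1 - 1 / r + ε ≥ 1`. Neighbors of `w` may overlap: `k < 3` excludes triangles.
* A vertex `z` at distance two gives up `b z ∩ Y` and receives instead the corresponding part of a
  copy of `Y` inside `E ∩ P w`, which neither the neighbors of `w` nor the base coloring use.

Pairwise distance at least six guarantees that adjacent vertices within distance two of `W` are
modified with respect to the same `w`.

A fractional coloring is handled through the independent sets `T` formed by the vertices that use
a given color: a family `D T` of disjoint color sets gives `v` the colors `⋃ T ∋ v, D T` (`palette`).
Since there are finitely many `T`, all copying of colorings reduces to cutting a set of reals into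
finitely many pieces of prescribed measures.
-/

open MeasureTheory

open scoped ENNReal Function

/-! ### Cutting sets of reals into pieces of prescribed measure -/

/-- Lebesgue measure takes all intermediate values: `x ↦ volume (S ∩ (-∞, x))` is `1`-Lipschitz, so the
intermediate value theorem applies. -/
theorem exists_subset_volume_eq {r : ℝ} {S : Set ℝ} (hS : S ⊆ Set.Ico 0 r)
    (hm : MeasurableSet S) {m : ℝ≥0∞} (h : m ≤ volume S) :
    ∃ T ⊆ S, MeasurableSet T ∧ volume T = m := by
  have hfin : volume S ≠ ∞ :=
    ne_top_of_le_ne_top (by simp [Real.volume_Ico]) (measure_mono hS)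
  have hfin' : ∀ x, volume (S ∩ Set.Iio x) ≠ ∞ := fun x =>
    ne_top_of_le_ne_top hfin (measure_mono Set.inter_subset_left)
  rcases lt_or_ge r 0 with hr | hr
  · have : S = ∅ := by
      rw [Set.Ico_eq_empty (by linarith)] at hS
      exact Set.subset_empty_iff.mp hS
    exact ⟨S, subset_rfl, hm, le_antisymm (by simp [this]) h⟩
  set f : ℝ → ℝ := fun x => (volume (S ∩ Set.Iio x)).toReal with hf
  have hlip : LipschitzWith 1 f := by
    refine LipschitzWith.of_le_add fun x y => ?_
    have hsub : S ∩ Set.Iio x ⊆ (S ∩ Set.Iio y) ∪ Set.Ico y x := by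
      rintro z ⟨hz, hzx⟩
      by_cases hzy : z < y
      · exact Or.inl ⟨hz, hzy⟩
      · exact Or.inr ⟨not_lt.mp hzy, hzx⟩
    have h1 : volume (S ∩ Set.Iio x) ≤ volume (S ∩ Set.Iio y) + ENNReal.ofReal (dist x y) := by
      refine (measure_mono hsub).trans ((measure_union_le _ _).trans ?_)
      gcongr
      rw [Real.volume_Ico]
      exact ENNReal.ofReal_le_ofReal (le_abs_self _)
    have h2 := ENNReal.toReal_mono (by simp [hfin' y]) h1
    rwa [ENNReal.toReal_add (hfin' y) (by simp), ENNReal.toReal_ofReal dist_nonneg] at h2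
  have h0 : f 0 = 0 := by
    have : S ∩ Set.Iio 0 = ∅ := by
      ext x
      simp only [Set.mem_inter_iff, Set.mem_Iio, Set.mem_empty_iff_false, iff_false, not_and, not_lt]
      exact fun hx => (hS hx).1
    simp [hf, this]
  have h1 : f r = (volume S).toReal := by
    have : S ∩ Set.Iio r = S := Set.inter_eq_left.mpr fun x hx => (hS hx).2
    simp [hf, this]
  have hmem : m.toReal ∈ Set.Icc (f 0) (f r) := by
    rw [h0, h1]
    exact ⟨ENNReal.toReal_nonneg, ENNReal.toReal_mono hfin h⟩
  obtain ⟨x, -, hx⟩ := intermediate_value_Icc hr hlip.continuous.continuousOn hmem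
  refine ⟨S ∩ Set.Iio x, Set.inter_subset_left, hm.inter measurableSet_Iio, ?_⟩
  exact (ENNReal.toReal_eq_toReal_iff' (hfin' x) (ne_top_of_le_ne_top hfin h)).mp hx

/-- Disjoint pieces of `S` with prescribed measures; they need not exhaust `S`. -/
theorem exists_disjoint_family {ι : Type*} [Fintype ι] {r : ℝ} {S : Set ℝ}
    (hS : S ⊆ Set.Ico 0 r) (hm : MeasurableSet S) (m : ι → ℝ≥0∞) (h : ∑ i, m i ≤ volume S) :
    ∃ A : ι → Set ℝ, (∀ i, A i ⊆ S) ∧ (∀ i, MeasurableSet (A i)) ∧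
      Pairwise (Disjoint on A) ∧ ∀ i, volume (A i) = m i := by
  classical
  have key : ∀ s : Finset ι, ∀ S : Set ℝ, S ⊆ Set.Ico 0 r → MeasurableSet S →
      ∑ i ∈ s, m i ≤ volume S →
      ∃ A : ι → Set ℝ, (∀ i, A i ⊆ S) ∧ (∀ i, MeasurableSet (A i)) ∧
        Pairwise (Disjoint on A) ∧ ∀ i ∈ s, volume (A i) = m i := by
    intro s
    induction s using Finset.induction_on with
    | empty =>
      intro S _ _ _
      exact ⟨fun _ => ∅, by simp, by simp, fun i j _ => by simp [Function.onFun], by simp⟩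
    | insert a s ha ih =>
      intro S hS hm h
      rw [Finset.sum_insert ha] at h
      obtain ⟨B, hBS, hB, hBm⟩ := exists_subset_volume_eq hS hm (le_self_add.trans h)
      have hfin : volume B ≠ ∞ :=
        ne_top_of_le_ne_top (by simp [Real.volume_Ico]) (measure_mono (hBS.trans hS))
      obtain ⟨A, hA1, hA2, hA3, hA4⟩ := ih (S \ B) (Set.sdiff_subset.trans hS) (hm.diff hB) (by
        rw [measure_sdiff hBS hB.nullMeasurableSet hfin, hBm]
        exact ENNReal.le_sub_of_add_le_left (hBm ▸ hfin) h)
      refine ⟨Function.update A a B, fun i => ?_, fun i => ?_, ?_, fun i hi => ?_⟩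
      · by_cases hi : i = a
        · subst hi; simpa using hBS
        · simpa [hi] using (hA1 i).trans Set.sdiff_subset
      · by_cases hi : i = a
        · subst hi; simpa using hB
        · simpa [hi] using hA2 i
      · have hdis : ∀ i, Disjoint B (A i) := fun i =>
          Set.disjoint_of_subset_right (hA1 i) Set.disjoint_sdiff_right
        intro i j hij
        by_cases hi : i = a
        · subst hi
          simpa [Function.onFun, hij.symm] using hdis j
        · by_cases hj : j = a
          · subst hj
            simpa [Function.onFun, hij] using (hdis i).symm
          · simpa [Function.onFun, hi, hj] using hA3 hij
      · by_cases hi' : i = a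
        · subst hi'; simpa using hBm
        · simpa [hi'] using hA4 i ((Finset.mem_insert.mp hi).resolve_left hi')
  obtain ⟨A, h1, h2, h3, h4⟩ := key Finset.univ S hS hm h
  exact ⟨A, h1, h2, h3, fun i => h4 i (Finset.mem_univ i)⟩

theorem volume_eq_sum_fiber {ι : Type*} [Fintype ι] {τ : ℝ → ι}
    (hτ : ∀ i, MeasurableSet (τ ⁻¹' {i})) {Q : Set ℝ} (hQ : MeasurableSet Q) :
    volume Q = ∑ i, volume (Q ∩ τ ⁻¹' {i}) := by
  have hdis : Pairwise (Disjoint on fun i => Q ∩ τ ⁻¹' {i}) := by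
    intro i j hij
    refine Set.disjoint_left.mpr ?_
    rintro x ⟨-, rfl⟩ ⟨-, h⟩
    exact hij h
  rw [← tsum_fintype (L := .unconditional ι), ← measure_iUnion hdis fun i => hQ.inter (hτ i)]
  congr 1
  ext x
  simp

/-- Additivity of `volume (Q ∩ ·)` over those members of a disjoint family that satisfy `p`. -/
theorem volume_inter_iUnion {ι : Type*} [Fintype ι] {A : ι → Set ℝ} (Q : Set ℝ)
    (hQ : MeasurableSet Q)
    (hm : ∀ i, MeasurableSet (A i)) (hd : Pairwise (Disjoint on A)) (p : ι → Prop)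
    [DecidablePred p] :
    volume (Q ∩ ⋃ i, ⋃ _ : p i, A i) = ∑ i, if p i then volume (Q ∩ A i) else 0 := by
  have : (Q ∩ ⋃ i, ⋃ _ : p i, A i) = ⋃ i ∈ Finset.univ.filter p, Q ∩ A i := by
    ext x; simp
  rw [this, measure_biUnion_finset _ (fun i _ => hQ.inter (hm i)), Finset.sum_filter]
  intro i _ j _ hij
  exact (hd hij).mono Set.inter_subset_right Set.inter_subset_right

/-- The points lying in exactly the sets `S v` with `v ∈ T` form a measurable set. -/
theorem measurableSet_pattern {V : Type*} [Finite V] {S : V → Set ℝ}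
    (hS : ∀ v, MeasurableSet (S v)) (T : Set V) :
    MeasurableSet {x | {v | x ∈ S v} = T} := by
  have : {x | {v | x ∈ S v} = T} = ⋂ v, {x | x ∈ S v ↔ v ∈ T} := by
    ext x; simp [Set.ext_iff]
  rw [this]
  refine MeasurableSet.iInter fun v => ?_
  by_cases hv : v ∈ T
  · simpa [hv] using hS v
  · have : {x | x ∈ S v ↔ v ∈ T} = (S v)ᶜ := by ext x; simp [hv]
    exact this ▸ (hS v).compl

/-- There are disjoint sets `D i` of prescribed measures `q i`, with `∑ q i = r`, each of which is
spread over `[0, r)` independently of every `P v`: each atom of the algebra generated by the `P v`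
is cut in the proportions `q i / r`. -/
theorem exists_independent_family {V ι : Type*} [Finite V] [Fintype ι] {r : ℝ} (hr : 0 < r)
    {P : V → Set ℝ} (hPm : ∀ v, MeasurableSet (P v)) (q : ι → ℝ≥0∞)
    (hq : ∑ i, q i = ENNReal.ofReal r) :
    ∃ D : ι → Set ℝ, (∀ i, D i ⊆ Set.Ico 0 r) ∧ (∀ i, MeasurableSet (D i)) ∧
      Pairwise (Disjoint on D) ∧ (∀ i, volume (D i) = q i) ∧
      ∀ i v, volume (D i ∩ P v) = q i / ENNReal.ofReal r * volume (Set.Ico 0 r ∩ P v) := by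
  classical
  have := Fintype.ofFinite V
  set ρ := ENNReal.ofReal r with hρ
  have hρ0 : ρ ≠ 0 := by simpa [hρ] using hr
  have hρt : ρ ≠ ∞ := by simp [hρ]
  set π : ℝ → Set V := fun x => {v | x ∈ P v} with hπ
  have hπm : ∀ U, MeasurableSet (π ⁻¹' {U}) := fun U => measurableSet_pattern hPm U
  have hsplit : ∀ U : Set V, ∃ A : ι → Set ℝ, (∀ i, A i ⊆ Set.Ico 0 r ∩ π ⁻¹' {U}) ∧
      (∀ i, MeasurableSet (A i)) ∧ Pairwise (Disjoint on A) ∧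
      ∀ i, volume (A i) = q i / ρ * volume (Set.Ico 0 r ∩ π ⁻¹' {U}) := by
    intro U
    refine exists_disjoint_family Set.inter_subset_left (measurableSet_Ico.inter (hπm U)) _ ?_
    simp_rw [div_eq_mul_inv]
    rw [← Finset.sum_mul, ← Finset.sum_mul, hq, ENNReal.mul_inv_cancel hρ0 hρt, one_mul]
  choose A hA1 hA2 hA3 hA4 using hsplit
  have hDm : ∀ i, MeasurableSet (⋃ U, A U i) := fun i => MeasurableSet.iUnion fun U => hA2 U i
  have hfib : ∀ i U, (⋃ U, A U i) ∩ π ⁻¹' {U} = A U i := by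
    intro i U
    ext x
    simp only [Set.mem_inter_iff, Set.mem_iUnion]
    constructor
    · rintro ⟨⟨U', hx⟩, hU⟩
      have h1 : π x = U' := (hA1 U' i hx).2
      have h2 : π x = U := hU
      rwa [← h2, h1]
    · exact fun hx => ⟨⟨U, hx⟩, (hA1 U i hx).2⟩
  have hP : ∀ i v, volume ((⋃ U, A U i) ∩ P v)
      = q i / ρ * volume (Set.Ico 0 r ∩ P v) := by
    intro i v
    rw [volume_eq_sum_fiber hπm ((hDm i).inter (hPm v)),
      volume_eq_sum_fiber hπm (measurableSet_Ico.inter (hPm v)), Finset.mul_sum]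
    refine Finset.sum_congr rfl fun U _ => ?_
    rw [Set.inter_right_comm, hfib, Set.inter_right_comm]
    by_cases hv : v ∈ U
    · have hsub : π ⁻¹' {U} ⊆ P v := by
        rintro x rfl
        exact hv
      rw [Set.inter_eq_left.mpr (((hA1 U i).trans Set.inter_subset_right).trans hsub),
        Set.inter_eq_left.mpr (Set.inter_subset_right.trans hsub), hA4]
    · have hdis : Disjoint (π ⁻¹' {U}) (P v) := by
        refine Set.disjoint_left.mpr ?_
        rintro x rfl h
        exact hv h
      rw [(hdis.mono_left ((hA1 U i).trans Set.inter_subset_right)).inter_eq,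
        (hdis.mono_left Set.inter_subset_right).inter_eq]
      simp
  refine ⟨fun i => ⋃ U, A U i, fun i => Set.iUnion_subset fun U => (hA1 U i).trans
    Set.inter_subset_left, hDm, ?_, fun i => ?_, hP⟩
  · intro i j hij
    refine Set.disjoint_left.mpr fun x hi hj => ?_
    obtain ⟨U, hU⟩ := Set.mem_iUnion.mp hi
    obtain ⟨U', hU'⟩ := Set.mem_iUnion.mp hj
    have h1 : π x = U := (hA1 U i hU).2
    have h2 : π x = U' := (hA1 U' j hU').2
    rw [← h2, h1] at hU'
    exact Set.disjoint_left.mp (hA3 U hij) hU hU'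
  · rw [volume_eq_sum_fiber hπm (hDm i)]
    simp_rw [hfib, hA4]
    rw [← Finset.mul_sum, ← volume_eq_sum_fiber hπm measurableSet_Ico, Real.volume_Ico, sub_zero,
      ENNReal.div_mul_cancel hρ0 hρt]

/-! ### Colorings given by weights on independent sets -/

/-- The set of colors of `v` when the colors in `D T` are used by exactly the vertices of the
independent set `T`. -/
def palette {V : Type*} {G : SimpleGraph V} (D : {T : Set V // G.IsIndepSet T} → Set ℝ) (v : V) :
    Set ℝ :=
  ⋃ T, ⋃ _ : v ∈ T.1, D T

theorem mem_palette {V : Type*} {G : SimpleGraph V} {D : {T : Set V // G.IsIndepSet T} → Set ℝ}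
    {v : V} {x : ℝ} : x ∈ palette D v ↔ ∃ T, v ∈ T.1 ∧ x ∈ D T := by
  simp [palette]

theorem palette_subset {V : Type*} {G : SimpleGraph V}
    {D : {T : Set V // G.IsIndepSet T} → Set ℝ} {S : Set ℝ} (hD : ∀ T, D T ⊆ S) (v : V) :
    palette D v ⊆ S := by
  intro x hx
  obtain ⟨T, -, hT⟩ := mem_palette.mp hx
  exact hD T hT

theorem measurableSet_palette {V : Type*} [Finite V] {G : SimpleGraph V}
    {D : {T : Set V // G.IsIndepSet T} → Set ℝ} (hD : ∀ T, MeasurableSet (D T)) (v : V) :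
    MeasurableSet (palette D v) :=
  MeasurableSet.iUnion fun T => MeasurableSet.iUnion fun _ => hD T

theorem disjoint_palette {V : Type*} {G : SimpleGraph V}
    {D : {T : Set V // G.IsIndepSet T} → Set ℝ} (hD : Pairwise (Disjoint on D)) {u v : V}
    (huv : G.Adj u v) : Disjoint (palette D u) (palette D v) := by
  refine Set.disjoint_left.mpr fun x hu hv => ?_
  obtain ⟨T, hT, hx⟩ := mem_palette.mp hu
  obtain ⟨T', hT', hx'⟩ := mem_palette.mp hv
  by_cases h : T = T'
  · subst h
    exact T.2 hT hT' huv.ne huv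
  · exact Set.disjoint_left.mp (hD h) hx hx'

/-- The base coloring `palette D` and the unused set `E` of measure `ε`, both spread uniformly with
respect to every `P w`. -/
theorem exists_base {V : Type*} [Finite V] {G : SimpleGraph V} {k ε : ℝ} (hk : 0 < k) (hε : 0 < ε)
    {c : V → Set ℝ} (hc : IsFracColoring G k c) {P : V → Set ℝ}
    (hPm : ∀ v, MeasurableSet (P v)) :
    ∃ (E : Set ℝ) (D : {T : Set V // G.IsIndepSet T} → Set ℝ),
      E ⊆ Set.Ico 0 (k + ε) ∧ MeasurableSet E ∧ volume E = ENNReal.ofReal ε ∧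
      (∀ T, D T ⊆ Set.Ico 0 (k + ε)) ∧ (∀ T, MeasurableSet (D T)) ∧ Pairwise (Disjoint on D) ∧
      (∀ T, Disjoint E (D T)) ∧ (∀ v, volume (palette D v) = 1) ∧
      (∀ w, volume (E ∩ P w) = ENNReal.ofReal ε / ENNReal.ofReal (k + ε) *
        volume (Set.Ico 0 (k + ε) ∩ P w)) ∧
      ∀ v w, volume (palette D v ∩ P w) = 1 / ENNReal.ofReal (k + ε) *
        volume (Set.Ico 0 (k + ε) ∩ P w) := by
  classical
  have := Fintype.ofFinite V
  obtain ⟨hc1, hc2, hc3, hc4⟩ := hc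
  have hr : 0 < k + ε := by positivity
  -- `τ x` is the independent set of all vertices using the color `x`.
  let τ : ℝ → {T : Set V // G.IsIndepSet T} := fun x => ⟨{v | x ∈ c v}, fun u hu v hv _ huv =>
    Set.disjoint_left.mp (hc4 u v huv) hu hv⟩
  have hτ : ∀ T, MeasurableSet (τ ⁻¹' {T}) := by
    intro T
    convert measurableSet_pattern hc2 T.1 using 1
    ext x
    simp [τ, Subtype.ext_iff]
  -- The index `none` stands for the unused part, of measure `ε`.
  let q : Option {T : Set V // G.IsIndepSet T} → ℝ≥0∞ := fun o =>
    o.elim (ENNReal.ofReal ε) fun T => volume (Set.Ico 0 k ∩ τ ⁻¹' {T})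
  have hq : ∑ o, q o = ENNReal.ofReal (k + ε) := by
    rw [Fintype.sum_option]
    simp only [q, Option.elim]
    rw [← volume_eq_sum_fiber hτ measurableSet_Ico, Real.volume_Ico, sub_zero, add_comm,
      ENNReal.ofReal_add hk.le hε.le]
  have hqv : ∀ v, (∑ T : {T : Set V // G.IsIndepSet T}, if v ∈ T.1 then q (some T) else 0) = 1 := by
    intro v
    rw [← hc3 v, volume_eq_sum_fiber hτ (hc2 v)]
    refine Finset.sum_congr rfl fun T _ => ?_
    split_ifs with hv
    · simp only [q, Option.elim]
      congr 1
      ext x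
      constructor
      · rintro ⟨_, rfl⟩
        exact ⟨hv, rfl⟩
      · rintro ⟨h1, h2⟩
        exact ⟨hc1 v h1, h2⟩
    · symm
      convert measure_empty (μ := volume)
      refine Set.eq_empty_of_forall_notMem ?_
      rintro x ⟨h1, rfl⟩
      exact hv h1
  obtain ⟨D, hD1, hD2, hD3, hD4, hD5⟩ := exists_independent_family hr hPm q hq
  have hdis : Pairwise (Disjoint on fun T => D (some T)) := fun T T' h =>
    hD3 (fun h' => h (Option.some_injective _ h'))
  refine ⟨D none, fun T => D (some T), hD1 _, hD2 _, hD4 none, fun T => hD1 _, fun T => hD2 _,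
    hdis, fun T => hD3 (by simp), fun v => ?_, fun w => hD5 none w, fun v w => ?_⟩
  · have := volume_inter_iUnion Set.univ MeasurableSet.univ (fun T => hD2 (some T)) hdis
      (fun T => v ∈ T.1)
    simp only [Set.univ_inter, hD4, hqv] at this
    exact this
  · have := volume_inter_iUnion (P w) (hPm w) (fun T => hD2 (some T)) hdis
      (fun T => v ∈ T.1)
    rw [Set.inter_comm, palette, this, ← hqv v]
    simp_rw [div_eq_mul_inv]
    rw [Finset.sum_mul, Finset.sum_mul]
    refine Finset.sum_congr rfl fun T _ => ?_
    rw [Set.inter_comm, hD5]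
    split_ifs <;> simp [div_eq_mul_inv]

/-! ### Recoloring around one precolored vertex -/

theorem three_le_of_triangle {V : Type*} {G : SimpleGraph V} {k : ℝ} {c : V → Set ℝ}
    (hc : IsFracColoring G k c) {u v w : V} (huv : G.Adj u v) (huw : G.Adj u w)
    (hvw : G.Adj v w) : 3 ≤ k := by
  obtain ⟨hc1, hc2, hc3, hc4⟩ := hc
  have h1 : volume (c u ∪ c v ∪ c w) = 3 := by
    rw [measure_union (Disjoint.union_left (hc4 _ _ huw) (hc4 _ _ hvw)) (hc2 w),
      measure_union (hc4 _ _ huv) (hc2 v), hc3, hc3, hc3]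
    norm_num
  have h2 : volume (c u ∪ c v ∪ c w) ≤ ENNReal.ofReal k := by
    have := measure_mono (μ := volume) (Set.union_subset (Set.union_subset (hc1 u) (hc1 v)) (hc1 w))
    simpa using this
  rw [h1] at h2
  by_contra hlt
  have := (ENNReal.ofReal_lt_ofReal_iff (q := 3) (by norm_num)).mpr (not_le.mp hlt)
  rw [ENNReal.ofReal_ofNat] at this
  exact absurd h2 (not_le.mpr this)

/-- Recoloring around `w`, whose prescribed set is `Q`: the neighbors `v` of `w` are to receive `N v`
and the vertices `v` at distance two `M v`, all others keeping the base coloring `palette D`. Only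
the disjointness relations needed for adjacent vertices at these distances are asserted. -/
theorem exists_local {V : Type*} [Finite V] {G : SimpleGraph V} {r : ℝ}
    {E : Set ℝ} {D : {T : Set V // G.IsIndepSet T} → Set ℝ} {w : V} {Q : Set ℝ}
    (hE : E ⊆ Set.Ico 0 r) (hEm : MeasurableSet E) (hD : ∀ T, D T ⊆ Set.Ico 0 r)
    (hDm : ∀ T, MeasurableSet (D T)) (hDd : Pairwise (Disjoint on D))
    (hED : ∀ T, Disjoint E (D T)) (hb : ∀ v, volume (palette D v) = 1)
    (hQm : MeasurableSet Q)
    (h1 : volume (E ∩ Q) + volume (palette D w ∩ Q) ≤ 1)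
    (h2 : ∀ v, volume (palette D v ∩ Q) ≤ volume E) :
    ∃ N M : V → Set ℝ,
      (∀ v, N v ⊆ Set.Ico 0 r) ∧ (∀ v, M v ⊆ Set.Ico 0 r) ∧
      (∀ v, MeasurableSet (N v)) ∧ (∀ v, MeasurableSet (M v)) ∧
      (∀ v, G.Adj w v → volume (N v) = 1) ∧ (∀ v, volume (M v) = 1) ∧
      (∀ v, G.Adj w v → Disjoint Q (N v)) ∧
      (∀ u v, G.Adj u v → Disjoint (N u) (M v)) ∧
      (∀ u v, G.Adj u v → Disjoint (M u) (M v)) ∧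
      (∀ u v, G.Adj u v → Disjoint (M u) (palette D v)) := by
  classical
  have := Fintype.ofFinite V
  have hbm := fun v => measurableSet_palette hDm v
  have hbr := fun v => palette_subset hD v
  have hEb : ∀ v, Disjoint E (palette D v) := by
    intro v
    refine Set.disjoint_left.mpr fun x hx hv => ?_
    obtain ⟨T, -, hT⟩ := mem_palette.mp hv
    exact Set.disjoint_left.mp (hED T) hx hT
  have hfin : ∀ {S : Set ℝ}, S ⊆ Set.Ico 0 r → volume S ≠ ∞ := fun hS =>
    ne_top_of_le_ne_top (by simp [Real.volume_Ico]) (measure_mono hS)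
  have hfb : ∀ v, volume (palette D v ∩ Q) ≠ ∞ := fun v =>
    hfin (Set.inter_subset_left.trans (hbr v))
  -- `Y` consists of base colors of `w`, so no neighbor of `w` uses it in the base coloring.
  obtain ⟨Y, hY, hYm, hYv⟩ := exists_subset_volume_eq (m := volume (E ∩ Q))
    (Set.sdiff_subset.trans (hbr w)) ((hbm w).diff hQm) (by
      rw [← measure_inter_add_sdiff (palette D w) hQm |>.trans (hb w), add_comm] at h1
      exact (ENNReal.add_le_add_iff_left (hfb w)).mp h1)
  have hYr : Y ⊆ Set.Ico 0 r := hY.trans (Set.sdiff_subset.trans (hbr w))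
  have hYE : Disjoint E Y := (hEb w).mono_right (hY.trans Set.sdiff_subset)
  -- `Z` is a copy inside `E ∩ Q` of the base coloring restricted to `Y`.
  obtain ⟨Z, hZ, hZm, hZd, hZv⟩ := exists_disjoint_family (Set.inter_subset_left.trans hE)
    (hEm.inter hQm) (fun T => volume (Y ∩ D T)) (by
      have := volume_inter_iUnion Y hYm hDm hDd (fun _ => True)
      simp only [if_true] at this
      rw [← this, ← hYv]
      exact measure_mono Set.inter_subset_left)
  have hZE : ∀ v, palette Z v ⊆ E ∩ Q := palette_subset hZ
  have hZpm := fun v => measurableSet_palette hZm v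
  -- `X v` is the set of colors available to a neighbor `v` of `w`.
  let X : V → Set ℝ := fun v => ((palette D v \ Q) ∪ (E \ Q)) ∪ Y
  have hXm : ∀ v, MeasurableSet (X v) := fun v =>
    (((hbm v).diff hQm).union (hEm.diff hQm)).union hYm
  have hXr : ∀ v, X v ⊆ Set.Ico 0 r := fun v => Set.union_subset (Set.union_subset
    (Set.sdiff_subset.trans (hbr v)) (Set.sdiff_subset.trans hE)) hYr
  have hXv : ∀ v, G.Adj w v → 1 ≤ volume (X v) := by
    intro v hv
    have d1 : Disjoint (palette D v \ Q ∪ E \ Q) Y := by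
      refine Disjoint.union_left ?_ (hYE.mono_left Set.sdiff_subset)
      exact (disjoint_palette hDd hv).symm.mono Set.sdiff_subset (hY.trans Set.sdiff_subset)
    have d2 : Disjoint (palette D v \ Q) (E \ Q) :=
      (hEb v).symm.mono Set.sdiff_subset Set.sdiff_subset
    rw [measure_union d1 hYm, measure_union d2 (hEm.diff hQm), hYv, add_assoc,
      measure_sdiff_add_inter E hQm, ← hb v, ← measure_sdiff_add_inter (palette D v) hQm]
    exact add_le_add le_rfl (h2 v)
  have hN : ∀ v, ∃ N ⊆ X v, MeasurableSet N ∧ (G.Adj w v → volume N = 1) := by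
    intro v
    by_cases hv : G.Adj w v
    · obtain ⟨N, a, b, c⟩ := exists_subset_volume_eq (hXr v) (hXm v) (hXv v hv)
      exact ⟨N, a, b, fun _ => c⟩
    · exact ⟨∅, Set.empty_subset _, MeasurableSet.empty, fun h => absurd h hv⟩
  choose N hNX hNm hNv using hN
  refine ⟨N, fun v => (palette D v \ Y) ∪ palette Z v, fun v => (hNX v).trans (hXr v),
    fun v => Set.union_subset (Set.sdiff_subset.trans (hbr v))
      ((hZE v).trans (Set.inter_subset_left.trans hE)), hNm,
    fun v => ((hbm v).diff hYm).union (hZpm v), hNv, fun v => ?_, fun v _ => ?_,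
    fun u v huv => ?_, fun u v huv => ?_, fun u v huv => ?_⟩
  · have d : Disjoint (palette D v \ Y) (palette Z v) :=
      (hEb v).symm.mono Set.sdiff_subset ((hZE v).trans Set.inter_subset_left)
    have e1 := volume_inter_iUnion Set.univ MeasurableSet.univ hZm hZd (fun T => v ∈ T.1)
    have e2 := volume_inter_iUnion Y hYm hDm hDd (fun T => v ∈ T.1)
    simp only [Set.univ_inter, hZv] at e1
    rw [← e2] at e1
    change volume (palette Z v) = volume (Y ∩ palette D v) at e1
    rw [measure_union d (hZpm v), e1, Set.inter_comm, measure_sdiff_add_inter _ hYm, hb]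
  · refine Disjoint.mono_right (hNX v) (Set.disjoint_left.mpr ?_)
    rintro x hx ((h | h) | h)
    exacts [h.2 hx, h.2 hx, (hY h).2 hx]
  · refine Disjoint.mono_left (hNX u) (Set.disjoint_left.mpr ?_)
    rintro x ((h | h) | h) (h' | h')
    · exact Set.disjoint_left.mp (disjoint_palette hDd huv) h.1 h'.1
    · exact h.2 (hZE v h').2
    · exact Set.disjoint_left.mp (hEb v) h.1 h'.1
    · exact h.2 (hZE v h').2
    · exact h'.2 h
    · exact (hY h).2 (hZE v h').2
  · refine Set.disjoint_left.mpr ?_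
    rintro x (h | h) (h' | h')
    · exact Set.disjoint_left.mp (disjoint_palette hDd huv) h.1 h'.1
    · exact Set.disjoint_left.mp (hEb u) (hZE v h').1 h.1
    · exact Set.disjoint_left.mp (hEb v) (hZE u h).1 h'.1
    · exact Set.disjoint_left.mp (disjoint_palette hZd huv) h h'
  · refine Set.disjoint_left.mpr ?_
    rintro x (h | h) h'
    · exact Set.disjoint_left.mp (disjoint_palette hDd huv) h.1 h'
    · exact Set.disjoint_left.mp (hEb v) (hZE u h).1 h'

/-! ### Gluing the local recolorings -/

/-- Extension theorem for distance six when `ε ≥ 1/(k+ε)`. -/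
theorem extend_d6 (k : ℚ) (hk0 : 0 < k) (hk : k < 3) (ε : ℝ) (hε : 0 < ε)
    (h : 1 / ((k : ℝ) + ε) ≤ ε)
    (V : Type) [Fintype V] (G : SimpleGraph V) (W : Set V)
    (hG : FracColorable G (k : ℝ)) (hW : DistAtLeast G 6 W)
    (P : V → Set ℝ) (hP : IsFracPrecoloring ((k : ℝ) + ε) W P) :
    ∃ c, IsFracColoring G ((k : ℝ) + ε) c ∧ ∀ w ∈ W, c w = P w := by
  classical
  obtain ⟨c₀, hc₀⟩ := hG
  have hkR : (0 : ℝ) < k := by exact_mod_cast hk0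
  have hk3 : (k : ℝ) < 3 := by exact_mod_cast hk
  set r : ℝ := (k : ℝ) + ε with hr
  have hr0 : 0 < r := by positivity
  -- Outside `W` the sets `P v` are arbitrary, possibly not measurable.
  let P' : V → Set ℝ := fun v => if v ∈ W then P v else ∅
  have hP' : ∀ w ∈ W, P' w = P w := fun w hw => by simp [P', hw]
  have hPm : ∀ v, MeasurableSet (P' v) := by
    intro v
    by_cases hv : v ∈ W
    · simpa [P', hv] using (hP v hv).2.1
    · simp [P', hv]
  obtain ⟨E, D, hE, hEm, hEv, hD, hDm, hDd, hED, hb, hEP, hbP⟩ := exists_base hkR hε hc₀ hPm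
  have hvol : ∀ w ∈ W, volume (Set.Ico 0 r ∩ P w) = 1 := by
    intro w hw
    rw [Set.inter_eq_right.mpr (hP w hw).1, (hP w hw).2.2]
  have hlocal : ∀ w : V, ∃ N M : V → Set ℝ, w ∈ W →
      (∀ v, N v ⊆ Set.Ico 0 r) ∧ (∀ v, M v ⊆ Set.Ico 0 r) ∧
      (∀ v, MeasurableSet (N v)) ∧ (∀ v, MeasurableSet (M v)) ∧
      (∀ v, G.Adj w v → volume (N v) = 1) ∧ (∀ v, volume (M v) = 1) ∧
      (∀ v, G.Adj w v → Disjoint (P w) (N v)) ∧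
      (∀ u v, G.Adj u v → Disjoint (N u) (M v)) ∧
      (∀ u v, G.Adj u v → Disjoint (M u) (M v)) ∧
      (∀ u v, G.Adj u v → Disjoint (M u) (palette D v)) := by
    intro w
    by_cases hw : w ∈ W
    swap
    · exact ⟨fun _ => ∅, fun _ => ∅, fun h => absurd h hw⟩
    have hEP' := hEP w
    have hbP' := fun v => hbP v w
    simp only [hP' w hw, ← hr, hvol w hw, mul_one] at hEP' hbP'
    -- A graph with a vertex is fractionally `k`-colorable only for `k ≥ 1`.
    have hk1 : (1 : ℝ) ≤ k := by
      have := measure_mono (μ := volume) (hc₀.1 w)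
      rw [hc₀.2.2.1 w, Real.volume_Ico, sub_zero] at this
      exact ENNReal.one_le_ofReal.mp this
    obtain ⟨N, M, hNM⟩ := exists_local (w := w) hE hEm hD hDm hDd hED hb (hP w hw).2.1
      (by
        rw [hEP', hbP', ← ENNReal.add_div, ENNReal.div_le_iff (by simpa using hr0) (by simp),
          one_mul, ← ENNReal.ofReal_one, ← ENNReal.ofReal_add hε.le zero_le_one]
        exact ENNReal.ofReal_le_ofReal (by linarith))
      (fun v => by
        rw [hbP', hEv, ← ENNReal.ofReal_one, ← ENNReal.ofReal_div_of_pos hr0]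
        exact ENNReal.ofReal_le_ofReal h)
    exact ⟨N, M, fun _ => hNM⟩
  choose N M hNM using hlocal
  -- The four alternatives are: `v` at distance 0, 1, 2, and at least 3 from `W`.
  have hex : ∀ v, ∃ S : Set ℝ, (v ∈ W ∧ S = P v) ∨
      (v ∉ W ∧ ∃ w ∈ W, G.Adj w v ∧ S = N w v) ∨
      (v ∉ W ∧ (∀ w ∈ W, ¬ G.Adj w v) ∧ ∃ w ∈ W, ∃ u, G.Adj w u ∧ G.Adj u v ∧ S = M w v) ∨
      (v ∉ W ∧ (∀ w ∈ W, ¬ G.Adj w v) ∧ (∀ w ∈ W, ∀ u, G.Adj w u → ¬ G.Adj u v) ∧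
        S = palette D v) := by
    intro v
    by_cases h0 : v ∈ W
    · exact ⟨P v, Or.inl ⟨h0, rfl⟩⟩
    by_cases h1 : ∃ w ∈ W, G.Adj w v
    · obtain ⟨w, hw, hv⟩ := h1
      exact ⟨_, Or.inr (Or.inl ⟨h0, w, hw, hv, rfl⟩)⟩
    push Not at h1
    by_cases h2 : ∃ w ∈ W, ∃ u, G.Adj w u ∧ G.Adj u v
    · obtain ⟨w, hw, u, hu, hv⟩ := h2
      exact ⟨_, Or.inr (Or.inr (Or.inl ⟨h0, h1, w, hw, u, hu, hv, rfl⟩))⟩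
    push Not at h2
    exact ⟨_, Or.inr (Or.inr (Or.inr ⟨h0, h1, h2, rfl⟩))⟩
  choose c hc using hex
  have heq : ∀ u ∈ W, ∀ v ∈ W, ∀ p : G.Walk u v, p.length < 6 → u = v := by
    intro u hu v hv p hp
    by_contra hne
    exact absurd (hW u hu v hv hne p) (not_le.mpr hp)
  refine ⟨c, ⟨fun v => ?_, fun v => ?_, fun v => ?_, ?_⟩, fun w hw => ?_⟩
  · rcases hc v with ⟨hv, h⟩ | ⟨-, w, hw, hv, h⟩ | ⟨-, -, w, hw, -, -, -, h⟩ | ⟨-, -, -, h⟩ <;> rw [h]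
    · exact (hP v hv).1
    · exact (hNM w hw).1 v
    · exact (hNM w hw).2.1 v
    · exact palette_subset hD v
  · rcases hc v with ⟨hv, h⟩ | ⟨-, w, hw, hv, h⟩ | ⟨-, -, w, hw, -, -, -, h⟩ | ⟨-, -, -, h⟩ <;> rw [h]
    · exact (hP v hv).2.1
    · exact (hNM w hw).2.2.1 v
    · exact (hNM w hw).2.2.2.1 v
    · exact measurableSet_palette hDm v
  · rcases hc v with ⟨hv, h⟩ | ⟨-, w, hw, hv, h⟩ | ⟨-, -, w, hw, -, -, -, h⟩ | ⟨-, -, -, h⟩ <;> rw [h]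
    · exact (hP v hv).2.2
    · exact (hNM w hw).2.2.2.2.1 v hv
    · exact (hNM w hw).2.2.2.2.2.1 v
    · exact hb v
  · have hWN : ∀ u v, G.Adj u v → u ∈ W → Disjoint (P u) (c v) := by
      intro u v huv hu
      rcases hc v with ⟨hv, -⟩ | ⟨-, w, hw, hv, h⟩ | ⟨-, hn, -⟩ | ⟨-, hn, -⟩
      · exact absurd (heq u hu v hv (.cons huv .nil) (by simp)) huv.ne
      · obtain rfl := heq u hu w hw (.cons huv (.cons hv.symm .nil)) (by simp)
        rw [h]
        exact (hNM u hu).2.2.2.2.2.2.1 v hv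
      · exact absurd huv (hn u hu)
      · exact absurd huv (hn u hu)
    have hNX : ∀ u v w, G.Adj u v → w ∈ W → G.Adj w u → v ∉ W → Disjoint (N w u) (c v) := by
      intro u v w huv hw hu hvW
      rcases hc v with ⟨hv, -⟩ | ⟨-, w', hw', hv, h⟩ | ⟨-, -, w', hw', x, hx, hv, h⟩ | ⟨-, -, hn, -⟩
      · exact absurd hv hvW
      · obtain rfl := heq w hw w' hw' (.cons hu (.cons huv (.cons hv.symm .nil))) (by simp)
        exact absurd (three_le_of_triangle hc₀ hu hv huv) (not_le.mpr hk3)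
      · obtain rfl := heq w hw w' hw'
          (.cons hu (.cons huv (.cons hv.symm (.cons hx.symm .nil)))) (by simp)
        rw [h]
        exact (hNM w hw).2.2.2.2.2.2.2.1 u v huv
      · exact absurd huv (hn w hw u hu)
    intro u v huv
    by_cases hvW : v ∈ W
    · obtain ⟨-, h⟩ := (hc v).resolve_right (by simp [hvW])
      rw [h]
      exact (hWN v u huv.symm hvW).symm
    rcases hc u with ⟨hu, h⟩ | ⟨hu, w, hw, hwu, h⟩ | ⟨hu, -, w, hw, x, hx, hxu, h⟩ | ⟨hu, -, hn, h⟩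
    · rw [h]
      exact hWN u v huv hu
    · rw [h]
      exact hNX u v w huv hw hwu hvW
    · rcases hc v with ⟨hv, -⟩ | ⟨-, w', hw', hv, h'⟩ | ⟨-, -, w', hw', y, hy, hyv, h'⟩ |
        ⟨-, -, -, h'⟩
      · exact absurd hv hvW
      · rw [h']
        exact (hNX v u w' huv.symm hw' hv hu).symm
      · obtain rfl := heq w hw w' hw'
          (.cons hx (.cons hxu (.cons huv (.cons hyv.symm (.cons hy.symm .nil))))) (by simp)
        rw [h, h']
        exact (hNM w hw).2.2.2.2.2.2.2.2.1 u v huv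
      · rw [h, h']
        exact (hNM w hw).2.2.2.2.2.2.2.2.2 u v huv
    · rcases hc v with ⟨hv, -⟩ | ⟨-, w', hw', hv, h'⟩ | ⟨-, -, w', hw', -, -, -, h'⟩ |
        ⟨-, -, -, h'⟩
      · exact absurd hv hvW
      · rw [h']
        exact (hNX v u w' huv.symm hw' hv hu).symm
      · rw [h, h']
        exact ((hNM w' hw').2.2.2.2.2.2.2.2.2 v u huv.symm).symm
      · rw [h, h']
        exact disjoint_palette hDd huv
  · rcases hc w with ⟨-, h⟩ | ⟨hn, -⟩ | ⟨hn, -⟩ | ⟨hn, -⟩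
    · exact h
    all_goals exact absurd hw hn
end

section
/- Let k ∈ [2.5,3) be a rational and ε a positive real such that ε < 1/(k+ε). Then there exist a graph G with fractional chromatic number k, a subset W of its vertex set whose vertices are at pairwise graph distance at least six, and a fractional (k+ε)-precoloring of W that cannot be extended to a fractional (k+ε)-coloring of G. -/
/-!
Write `k = (2h + m) / (2h)` with `3h ≤ m ≤ 4h`, and `K = k + ε`. Let `H` be the following weighted
graph: vertices `x a` (arcs of length `2h` on the cycle `ZMod m`), `y s b` with `s` one of two signs
(arcs of length `h`), and `u`. Each `x a` is adjacent to `u`; vertices `x a`, `y s b`, and also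
vertices `y s b`, `y s' b'` of different signs, are adjacent when their arcs are disjoint. With
weights `2h` on `x a`, `m - 2h` on `y s b` and `(4h - m) m` on `u`, the total weight is
`m (2h + m)`, the vertices `x a` weigh `2hm` in total, and no independent set weighs more than
`2hm` (`weight_arith`). The last bound rests on the fact that adding an interval of `L + 1` residues
to a nonempty subset of `ZMod m` enlarges it by at least `L` elements unless it becomes everything
(`card_add_card_le`). So `H` has fractional chromatic number at least `k`.

The graph `G` has one set of core vertices `z a` and `N` gadgets. The `i`-th gadget is a copy
`x i a`, `y i s b`, `u i` of `H` together with a vertex `w i` adjacent to all `x i a`, and the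
vertices `z a` are joined to the `y i s b` and `u i` in the same way as the `x i a` are. Thus `w i`
is at distance at least three from the core and two vertices `w i`, `w j` are at distance at least
six. Assigning to each arc its points as colors, plus `h` extra colors of its sign to each `y i s b`
and all `2h` extra colors to `u i` and `w i`, shows that `G` is fractionally `k`-colorable
(`fracColorable_gadgetGraph`).

In a fractional `K`-coloring `c`, a color outside `c (w i)` is counted on the `x i a`, `y i s b`,
`u i`, and a color in `c (w i)`, which no `x i a` can use, on the `z a`, `y i s b`, `u i`. In either
case the weight is at most `2hm`, and integrating over all colors gives (`gadget_bound`)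
`m (2h + m) + 2h ∑ a, |c (z a) ∩ c (w i)| ≤ 2hm K`.
Precolor the `w i` by `N` equally spaced unit intervals modulo `K`. They cover every point at least
`⌊N / K⌋` times, so averaging over `i` yields `k + ⌊N / K⌋ / N ≤ K`, which for large `N` contradicts
`ε < 1 / K`.
-/

open MeasureTheory

/-! ### Cyclic arcs and the weighted independence bound -/

section Combinatorics

/-- The cyclic arc `{a, a + 1, …, a + l - 1}` in `ZMod m`. -/
def cycArc {m : ℕ} (a : ZMod m) (l : ℕ) : Finset (ZMod m) :=
  (Finset.range l).image fun n : ℕ => a + (n : ZMod m)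

lemma natCast_inj_of_lt {m a b : ℕ} (ha : a < m) (hb : b < m)
    (h : (a : ZMod m) = (b : ZMod m)) : a = b := by
  have := (ZMod.natCast_eq_natCast_iff a b m).1 h
  exact Nat.ModEq.eq_of_lt_of_lt this ha hb

lemma card_cycArc {m : ℕ} (a : ZMod m) {l : ℕ} (hl : l ≤ m) : (cycArc a l).card = l := by
  unfold cycArc
  rw [Finset.card_image_of_injOn, Finset.card_range]
  intro x hx y hy hxy
  simp only [Finset.coe_range, Set.mem_Iio] at hx hy
  exact natCast_inj_of_lt (by omega) (by omega) (add_left_cancel hxy)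

lemma disjoint_cycArc {m : ℕ} (a : ZMod m) {l l' s : ℕ} (h1 : l ≤ s) (h2 : s + l' ≤ m) :
    Disjoint (cycArc a l) (cycArc (a + (s : ZMod m)) l') := by
  rw [Finset.disjoint_left]
  intro x hx hy
  simp only [cycArc, Finset.mem_image, Finset.mem_range] at hx hy
  obtain ⟨n, hn, rfl⟩ := hx
  obtain ⟨n', hn', he⟩ := hy
  rw [add_assoc, ← Nat.cast_add] at he
  have := natCast_inj_of_lt (by omega) (by omega) (add_left_cancel he)
  omega

/-- Adding an interval of `L + 1` residues to a set `F ⊆ ZMod m` enlarges `F` by at least `L`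
elements as long as the result misses a nonempty set `G`. -/
lemma card_add_card_le {m : ℕ} [NeZero m] (L : ℕ) : ∀ (F G : Finset (ZMod m)),
    F.Nonempty → G.Nonempty → (∀ a ∈ F, ∀ j ≤ L, a + (j : ZMod m) ∉ G) →
    F.card + G.card + L ≤ m := by
  classical
  induction L with
  | zero =>
    intro F G _ _ h
    have hd : Disjoint F G := Finset.disjoint_left.2 fun a ha => by simpa using h a ha 0 le_rfl
    have := Finset.card_le_univ (F ∪ G)
    rw [Finset.card_union_of_disjoint hd, ZMod.card] at this
    omega
  | succ L ih =>
    intro F G hF hG h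
    -- `F` is not invariant under adding one, since it is neither empty nor everything
    have hex : ∃ a ∈ F, a + 1 ∉ F := by
      by_contra! hcl
      obtain ⟨a, ha⟩ := hF
      obtain ⟨g, hg⟩ := hG
      have hall : ∀ n : ℕ, a + (n : ZMod m) ∈ F := by
        intro n
        induction n with
        | zero => simpa using ha
        | succ n ihn => simpa [add_assoc] using hcl _ ihn
      have := hall (g - a).val
      rw [ZMod.natCast_zmod_val] at this
      have h0 := h _ this 0 (Nat.zero_le _)
      simp at h0
      exact h0 hg
    obtain ⟨a, ha, ha1⟩ := hex
    have := ih (F ∪ F.image (· + 1)) G (hF.mono Finset.subset_union_left) hG (by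
      intro b hb j hj
      rcases Finset.mem_union.1 hb with hb | hb
      · exact h b hb j (by omega)
      · obtain ⟨b', hb', rfl⟩ := Finset.mem_image.1 hb
        have := h b' hb' (j + 1) (by omega)
        push_cast at this
        rwa [add_comm (j : ZMod m), ← add_assoc] at this)
    have hlt : F.card < (F ∪ F.image (· + 1)).card :=
      Finset.card_lt_card ⟨Finset.subset_union_left, fun hs =>
        ha1 (hs (Finset.mem_union_right _ (Finset.mem_image_of_mem _ ha)))⟩
    omega

/-- Two families of arcs (given by their starting points) without disjoint members. -/
lemma card_add_card_le_of_arcs {m : ℕ} [NeZero m] {l l' : ℕ} (hl : l + l' ≤ m)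
    (F G : Finset (ZMod m)) (hF : F.Nonempty) (hG : G.Nonempty)
    (h : ∀ a ∈ F, ∀ b ∈ G, ¬ Disjoint (cycArc a l) (cycArc b l')) :
    F.card + G.card ≤ l + l' := by
  classical
  have := card_add_card_le (m - l - l') (F.image (· + (l : ZMod m))) G (hF.image _) hG (by
    intro a ha j hj hG'
    obtain ⟨a', ha', rfl⟩ := Finset.mem_image.1 ha
    refine h a' ha' _ hG' ?_
    rw [add_assoc, ← Nat.cast_add]
    exact disjoint_cycArc a' (by omega) (by omega))
  rw [Finset.card_image_of_injective _ (add_left_injective _)] at this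
  omega

/-- The weighted independence bound, in terms of the numbers `f`, `g₀`, `g₁`, `υ` of vertices
of each kind in an independent set. -/
lemma weight_arith (h m f g₀ g₁ υ : ℕ) (h1 : 3 * h ≤ m) (h2 : m ≤ 4 * h)
    (hf : f ≤ m) (hg₀ : g₀ ≤ m) (hg₁ : g₁ ≤ m) (hυ : υ ≤ 1) (hυf : υ = 1 → f = 0)
    (hf₀ : f ≠ 0 → g₀ ≠ 0 → f + g₀ ≤ 3 * h) (hf₁ : f ≠ 0 → g₁ ≠ 0 → f + g₁ ≤ 3 * h)
    (hgg : g₀ ≠ 0 → g₁ ≠ 0 → g₀ + g₁ ≤ 2 * h) :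
    2 * (h : ℝ) * f + ((m : ℝ) - 2 * h) * (g₀ + g₁) + (4 * (h : ℝ) - m) * m * υ
      ≤ 2 * h * m := by
  have hg : g₀ + g₁ ≤ m := by
    by_cases a : g₀ = 0
    · omega
    by_cases b : g₁ = 0
    · omega
    have := hgg a b
    omega
  have h1' : 3 * (h : ℝ) ≤ m := by exact_mod_cast h1
  have h2' : (m : ℝ) ≤ 4 * h := by exact_mod_cast h2
  have hg' : (g₀ : ℝ) + g₁ ≤ m := by exact_mod_cast hg
  have hf' : (f : ℝ) ≤ m := by exact_mod_cast hf
  have hh0 : (0 : ℝ) ≤ h := h.cast_nonneg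
  have hm0 : (0 : ℝ) ≤ m := m.cast_nonneg
  by_cases f0 : f = 0
  · subst f0
    have hυ' : (υ : ℝ) ≤ 1 := by exact_mod_cast hυ
    have e1 : ((m : ℝ) - 2 * h) * (g₀ + g₁) ≤ (m - 2 * h) * m :=
      mul_le_mul_of_nonneg_left hg' (by linarith)
    have e2 : (4 * (h : ℝ) - m) * m * υ ≤ (4 * h - m) * m * 1 :=
      mul_le_mul_of_nonneg_left hυ' (mul_nonneg (by linarith) hm0)
    push_cast
    nlinarith
  have υ0 : υ = 0 := by
    by_contra hne
    exact f0 (hυf (by omega))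
  subst υ0
  -- the case in which the independent set meets at most one of the two families of short arcs
  have key : ∀ g : ℕ, (g ≠ 0 → f + g ≤ 3 * h) →
      2 * (h : ℝ) * f + ((m : ℝ) - 2 * h) * g ≤ 2 * h * m := by
    intro g hfg
    by_cases g0 : g = 0
    · subst g0
      push_cast
      nlinarith
    have : (f : ℝ) + g ≤ 3 * h := by exact_mod_cast hfg g0
    have gn : (0 : ℝ) ≤ g := g.cast_nonneg
    have fn : (0 : ℝ) ≤ f := f.cast_nonneg
    nlinarith [mul_nonneg gn (sub_nonneg.2 h2'), mul_nonneg hh0 (sub_nonneg.2 h1')]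
  by_cases a : g₀ = 0
  · subst a
    simpa using key g₁ (hf₁ f0)
  by_cases b : g₁ = 0
  · subst b
    simpa using key g₀ (hf₀ f0)
  have c1 : (f : ℝ) + g₀ ≤ 3 * h := by exact_mod_cast hf₀ f0 a
  have c2 : (f : ℝ) + g₁ ≤ 3 * h := by exact_mod_cast hf₁ f0 b
  have c3 : (g₀ : ℝ) + g₁ ≤ 2 * h := by exact_mod_cast hgg a b
  push_cast
  rcases le_total (f : ℝ) (2 * h) with hc | hc
  · nlinarith [mul_le_mul_of_nonneg_left c3 (by linarith : (0 : ℝ) ≤ m - 2 * h)]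
  · nlinarith [mul_le_mul_of_nonneg_left (add_le_add c1 c2) (by linarith : (0 : ℝ) ≤ m - 2 * h),
      mul_nonneg (sub_nonneg.2 hc) (sub_nonneg.2 h1')]

end Combinatorics

/-! ### Integration and cyclic unit intervals -/

section Measure

/-- Integrated form of the weighted independence bound. -/
lemma weight_measure {h m : ℕ} [NeZero m] (h1 : 3 * h ≤ m) (h2 : m ≤ 4 * h) {r : ℝ} (hr : 0 ≤ r)
    (B : ZMod m → Set ℝ) (Y : Bool → ZMod m → Set ℝ) (U : Set ℝ)
    (mB : ∀ a, MeasurableSet (B a)) (mY : ∀ s b, MeasurableSet (Y s b)) (mU : MeasurableSet U)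
    (sB : ∀ a, B a ⊆ Set.Ico 0 r) (sY : ∀ s b, Y s b ⊆ Set.Ico 0 r) (sU : U ⊆ Set.Ico 0 r)
    (dBU : ∀ a, Disjoint (B a) U)
    (dBY : ∀ a s b, Disjoint (cycArc a (2 * h)) (cycArc b h) → Disjoint (B a) (Y s b))
    (dYY : ∀ b b', Disjoint (cycArc b h) (cycArc b' h) → Disjoint (Y false b) (Y true b')) :
    2 * (h : ℝ) * ∑ a, volume.real (B a)
      + ((m : ℝ) - 2 * h) * (∑ b, volume.real (Y false b) + ∑ b, volume.real (Y true b))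
      + (4 * (h : ℝ) - m) * m * volume.real U ≤ 2 * h * m * r := by
  classical
  set χ : Set ℝ → ℝ → ℝ := fun S => S.indicator 1 with hχ
  have hint : ∀ S : Set ℝ, MeasurableSet S → S ⊆ Set.Ico 0 r → Integrable (χ S) := by
    intro S hS hS'
    refine (integrable_indicator_iff hS).2 (integrableOn_const (C := (1 : ℝ)) ?_)
    exact ((measure_mono hS').trans_lt measure_Ico_lt_top).ne
  have hval : ∀ S : Set ℝ, MeasurableSet S → ∫ t, χ S t = volume.real S := fun S hS =>
    integral_indicator_one hS
  have hpt : ∀ t, 2 * (h : ℝ) * ∑ a, χ (B a) t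
      + ((m : ℝ) - 2 * h) * (∑ b, χ (Y false b) t + ∑ b, χ (Y true b) t)
      + (4 * (h : ℝ) - m) * m * χ U t ≤ 2 * h * m * χ (Set.Ico 0 r) t := by
    intro t
    have hz : ∀ S : Set ℝ, t ∉ S → χ S t = 0 := fun S hS => Set.indicator_of_notMem hS _
    have ho : ∀ S : Set ℝ, t ∈ S → χ S t = 1 := fun S hS => by simp [hχ, hS]
    by_cases ht : t ∈ Set.Ico 0 r
    · have hsum : ∀ S : ZMod m → Set ℝ,
          ∑ a, χ (S a) t = ((Finset.univ.filter fun a => t ∈ S a).card : ℝ) := by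
        intro S
        rw [Finset.card_filter]
        push_cast
        refine Finset.sum_congr rfl fun a _ => ?_
        split_ifs with hta
        · exact ho _ hta
        · exact hz _ hta
      have hU : χ U t = ((if t ∈ U then 1 else 0 : ℕ) : ℝ) := by
        split_ifs with hta
        · simpa using ho _ hta
        · simpa using hz _ hta
      rw [hsum, hsum, hsum, hU, ho _ ht, mul_one]
      have hle : ∀ F : Finset (ZMod m), F.card ≤ m := fun F => by
        simpa [ZMod.card] using Finset.card_le_univ F
      have hnd : ∀ {S T : Set ℝ}, t ∈ S → t ∈ T → ¬ Disjoint S T := fun hS hT hd =>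
        Set.disjoint_left.1 hd hS hT
      have hne : ∀ {F : Finset (ZMod m)}, F.card ≠ 0 → F.Nonempty := fun hF =>
        Finset.card_pos.1 (Nat.pos_of_ne_zero hF)
      have hBY : ∀ s, (Finset.univ.filter fun a => t ∈ B a).card ≠ 0 →
          (Finset.univ.filter fun b => t ∈ Y s b).card ≠ 0 →
          (Finset.univ.filter fun a => t ∈ B a).card
            + (Finset.univ.filter fun b => t ∈ Y s b).card ≤ 3 * h := by
        intro s hf hg
        have := card_add_card_le_of_arcs (l := 2 * h) (l' := h) (by omega) _ _ (hne hf) (hne hg)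
          (by
            intro a ha b hb hd
            simp only [Finset.mem_filter, Finset.mem_univ, true_and] at ha hb
            exact hnd ha hb (dBY a s b hd))
        omega
      refine weight_arith h m _ _ _ _ h1 h2 (hle _) (hle _) (hle _) (by split_ifs <;> simp) ?_
        (hBY false) (hBY true) ?_
      · intro hu
        have htU : t ∈ U := by
          by_contra hc
          simp [hc] at hu
        refine Finset.card_eq_zero.2 (Finset.filter_eq_empty_iff.2 fun a _ ha => ?_)
        exact hnd ha htU (dBU a)
      · intro hf hg
        have := card_add_card_le_of_arcs (l := h) (l' := h) (by omega) _ _ (hne hf) (hne hg)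
          (by
            intro a ha b hb hd
            simp only [Finset.mem_filter, Finset.mem_univ, true_and] at ha hb
            exact hnd ha hb (dYY a b hd))
        omega
    · have hz' : ∀ S : Set ℝ, S ⊆ Set.Ico 0 r → χ S t = 0 := fun S hS => hz _ fun hc => ht (hS hc)
      simp [hz' _ (sB _), hz' _ (sY _ _), hz' _ sU, hz _ ht]
  have i1 : Integrable fun t => 2 * (h : ℝ) * ∑ a, χ (B a) t :=
    (integrable_finsetSum _ fun a _ => hint _ (mB a) (sB a)).const_mul _
  have iY : ∀ s, Integrable fun t => ∑ b, χ (Y s b) t := fun s =>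
    integrable_finsetSum _ fun b _ => hint _ (mY s b) (sY s b)
  have i2 : Integrable fun t =>
      ((m : ℝ) - 2 * h) * (∑ b, χ (Y false b) t + ∑ b, χ (Y true b) t) :=
    ((iY false).add (iY true)).const_mul _
  have i12 : Integrable fun t => 2 * (h : ℝ) * ∑ a, χ (B a) t
      + ((m : ℝ) - 2 * h) * (∑ b, χ (Y false b) t + ∑ b, χ (Y true b) t) := i1.add i2
  have i3 := (hint U mU sU).const_mul ((4 * (h : ℝ) - m) * m)
  have i4 := (hint _ (measurableSet_Ico (a := (0 : ℝ)) (b := r)) subset_rfl).const_mul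
    (2 * (h : ℝ) * m)
  have := integral_mono (i12.add i3) i4 hpt
  simp only [Pi.add_apply] at this
  rw [integral_add i12 i3, integral_add i1 i2, integral_const_mul, integral_const_mul, integral_const_mul, integral_const_mul,
    integral_add (iY false) (iY true),
    integral_finsetSum _ fun a _ => hint _ (mB a) (sB a),
    integral_finsetSum _ fun b _ => hint _ (mY false b) (sY false b),
    integral_finsetSum _ fun b _ => hint _ (mY true b) (sY true b)] at this
  simp only [hval _ (mB _), hval _ (mY _ _), hval _ mU, hval _ measurableSet_Ico] at this
  simpa [Real.volume_real_Ico, hr] using this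

/-- The interval `[s, s + 1)`, for `0 ≤ s < K`, reduced modulo `K` to a subset of `[0, K)`. -/
def wrapIco (K s : ℝ) : Set ℝ := Set.Ico s (min (s + 1) K) ∪ Set.Ico 0 (s + 1 - K)

lemma measurableSet_wrapIco (K s : ℝ) : MeasurableSet (wrapIco K s) :=
  measurableSet_Ico.union measurableSet_Ico

lemma wrapIco_subset {K s : ℝ} (hK : 1 ≤ K) (h0 : 0 ≤ s) (hs : s < K) :
    wrapIco K s ⊆ Set.Ico 0 K := by
  rintro x (⟨h1, h2⟩ | ⟨h1, h2⟩)
  · exact ⟨h0.trans h1, h2.trans_le (min_le_right _ _)⟩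
  · exact ⟨h1, by linarith⟩

lemma volume_wrapIco {K s : ℝ} (hK : 1 ≤ K) (hs : s < K) :
    volume (wrapIco K s) = 1 := by
  unfold wrapIco
  rw [measure_union _ measurableSet_Ico, Real.volume_Ico, Real.volume_Ico]
  · rcases le_total (s + 1) K with hc | hc
    · rw [min_eq_left hc, ENNReal.ofReal_of_nonpos (by linarith : s + 1 - K - 0 ≤ 0)]
      simp
    · rw [min_eq_right hc, ← ENNReal.ofReal_add (by linarith) (by linarith)]
      ring_nf
      simp
  · rw [Set.disjoint_left]
    rintro x ⟨h1, _⟩ ⟨_, h2⟩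
    linarith

/-- Every point of `[0, K)` lies in at least `⌊N / K⌋` of the `N` equally spaced
cyclic unit intervals. -/
lemma card_wrapIco {K : ℝ} (hK : 1 ≤ K) {N : ℕ} (hN : 0 < N) {M : ℕ} (hM : M * K ≤ N) {x : ℝ}
    (hx : x ∈ Set.Ico 0 K) [DecidablePred fun i : Fin N => x ∈ wrapIco K (i * (K / N))] :
    M ≤ (Finset.univ.filter fun i : Fin N => x ∈ wrapIco K (i * (K / N))).card := by
  classical
  have hN' : (0 : ℝ) < N := by exact_mod_cast hN
  have hK0 : 0 < K := by linarith
  set η := K / N with hη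
  have hη0 : 0 < η := by positivity
  have hNη : N * η = K := by rw [hη]; field_simp
  have hMη : M * η ≤ 1 := by
    rw [hη, ← mul_div_assoc, div_le_one hN']
    exact hM
  have hMN : M ≤ N := by
    have : (M : ℝ) ≤ N := le_trans (by nlinarith [M.cast_nonneg (α := ℝ)]) hM
    exact_mod_cast this
  -- `x` lies in the `j`-th cell `[j η, (j + 1) η)`; the intervals starting at the `M` cells
  -- cyclically preceding it contain `x`
  set j := ⌊x / η⌋₊ with hj
  have hj1 : j * η ≤ x := by
    rw [← le_div_iff₀ hη0]
    exact Nat.floor_le (div_nonneg hx.1 hη0.le)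
  have hj2 : x < (j + 1) * η := by
    rw [← div_lt_iff₀ hη0]
    exact Nat.lt_floor_add_one _
  have hjN : j < N := by
    have : (j : ℝ) < N := by
      by_contra! hc
      have := mul_le_mul_of_nonneg_right hc hη0.le
      linarith [hx.2]
    exact_mod_cast this
  let φ : Fin M → Fin N := fun l =>
    if hl : l.1 ≤ j then ⟨j - l.1, by omega⟩ else ⟨j + N - l.1, by omega⟩
  have hφ : Function.Injective φ := by
    intro l l' hll
    have h1 := l.2
    have h2 := l'.2
    simp only [φ] at hll
    ext
    split_ifs at hll <;> simp only [Fin.mk.injEq] at hll <;> omega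
  have := Finset.card_le_card_of_injOn (s := (Finset.univ : Finset (Fin M)))
    (t := Finset.univ.filter fun i : Fin N => x ∈ wrapIco K (i * η)) φ (by
      intro l _
      simp only [Finset.coe_filter, Finset.mem_univ, true_and, Set.mem_ofPred_eq, φ]
      have hl1 : ((l.1 : ℝ) + 1) * η ≤ 1 := by
        refine le_trans (mul_le_mul_of_nonneg_right ?_ hη0.le) hMη
        exact_mod_cast l.2
      have hl0 : 0 ≤ (l.1 : ℝ) * η := by positivity
      split_ifs with hl
      · left
        simp only [Nat.cast_sub hl]
        refine ⟨by nlinarith, lt_min (by nlinarith) hx.2⟩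
      · right
        simp only [Nat.cast_sub (show l.1 ≤ j + N by omega), Nat.cast_add]
        refine ⟨hx.1, by nlinarith⟩) hφ.injOn
  rw [Finset.card_univ, Fintype.card_fin] at this
  convert this

lemma sum_inter_wrapIco {K : ℝ} (hK : 1 ≤ K) {N : ℕ} (hN : 0 < N) {M : ℕ} (hM : M * K ≤ N)
    {S : Set ℝ} (hS : MeasurableSet S) (hSK : S ⊆ Set.Ico 0 K) :
    M * volume.real S ≤ ∑ i : Fin N, volume.real (S ∩ wrapIco K (i * (K / N))) := by
  classical
  have hfin : ∀ T : Set ℝ, T ⊆ S → volume T ≠ ⊤ := fun T hT =>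
    ((measure_mono (hT.trans hSK)).trans_lt measure_Ico_lt_top).ne
  have hm : ∀ i : Fin N, MeasurableSet (S ∩ wrapIco K (i * (K / N))) := fun i =>
    hS.inter (measurableSet_wrapIco _ _)
  have hint : ∀ T : Set ℝ, MeasurableSet T → T ⊆ S → Integrable (T.indicator (1 : ℝ → ℝ)) :=
    fun T hT hTS => (integrable_indicator_iff hT).2 (integrableOn_const (C := (1 : ℝ)) (hfin T hTS))
  have hpt : ∀ t, (M : ℝ) * S.indicator (1 : ℝ → ℝ) t
      ≤ ∑ i : Fin N, (S ∩ wrapIco K (i * (K / N))).indicator (1 : ℝ → ℝ) t := by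
    intro t
    by_cases ht : t ∈ S
    · have := card_wrapIco hK hN hM (hSK ht)
      rw [Finset.card_filter] at this
      have h' : (M : ℝ) ≤ ∑ i : Fin N, if t ∈ wrapIco K (i * (K / N)) then (1 : ℝ) else 0 := by
        exact_mod_cast this
      simpa [Set.indicator_apply, ht] using h'
    · simp [ht]
  have := integral_mono ((hint S hS subset_rfl).const_mul (M : ℝ))
    (integrable_finsetSum _ fun i _ => hint _ (hm i) Set.inter_subset_left) hpt
  rw [integral_const_mul, integral_finsetSum _ fun i _ => hint _ (hm i) Set.inter_subset_left,
    integral_indicator_one hS] at this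
  simpa only [integral_indicator_one (hm _)] using this

end Measure

/-! ### From multicolorings to fractional colorings -/

section Coloring

/-- A multicoloring with `n` colors in which every vertex receives `q` colors gives a fractional
`n / q`-coloring: color number `j` becomes the interval `[j / q, (j + 1) / q)`. -/
lemma fracColorable_of_multicoloring {V : Type*} (G : SimpleGraph V) {C : Type*} [Fintype C]
    {q : ℕ} (hq : 0 < q) (f : V → Finset C) (hf : ∀ v, (f v).card = q)
    (hd : ∀ u v, G.Adj u v → Disjoint (f u) (f v)) :
    FracColorable G ((Fintype.card C : ℝ) / q) := by
  classical
  have hq' : (0 : ℝ) < q := by exact_mod_cast hq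
  let e := Fintype.equivFin C
  let I : C → Set ℝ := fun j => Set.Ico ((e j : ℕ) / (q : ℝ)) (((e j : ℕ) + 1) / (q : ℝ))
  have hI : ∀ j j', j ≠ j' → Disjoint (I j) (I j') := by
    intro j j' hjj
    rw [Set.disjoint_left]
    rintro x ⟨h1, h2⟩ ⟨h3, h4⟩
    rw [div_le_iff₀ hq'] at h1 h3
    rw [lt_div_iff₀ hq'] at h2 h4
    apply hjj
    apply e.injective
    ext
    have a1 : ((e j : ℕ) : ℝ) < (e j' : ℕ) + 1 := by linarith
    have a2 : ((e j' : ℕ) : ℝ) < (e j : ℕ) + 1 := by linarith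
    norm_cast at a1 a2
    omega
  refine ⟨fun v => ⋃ j ∈ f v, I j, ?_, ?_, ?_, ?_⟩
  · intro v x hx
    simp only [Set.mem_iUnion] at hx
    obtain ⟨j, _, h1, h2⟩ := hx
    refine ⟨le_trans (by positivity) h1, h2.trans_le ?_⟩
    gcongr
    exact_mod_cast (e j).2
  · exact fun v => Finset.measurableSet_biUnion _ fun j _ => measurableSet_Ico
  · intro v
    rw [measure_biUnion_finset (fun j _ j' _ h => hI j j' h) fun j _ => measurableSet_Ico]
    have : ∀ j, volume (I j) = ENNReal.ofReal (1 / q) := by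
      intro j
      simp only [I, Real.volume_Ico]
      congr 1
      ring
    simp only [this, Finset.sum_const, hf, nsmul_eq_mul]
    rw [← ENNReal.ofReal_natCast, ← ENNReal.ofReal_mul hq'.le, mul_one_div_cancel hq'.ne',
      ENNReal.ofReal_one]
  · intro u v huv
    simp only [Set.disjoint_iUnion_left, Set.disjoint_iUnion_right]
    intro j hj j' hj'
    refine hI _ _ fun hjj => ?_
    subst hjj
    exact Finset.disjoint_left.1 (hd u v huv) hj' hj

end Coloring

/-! ### The graph -/

section Graph

/-- Vertices of the graph: `z a` form the shared core, and the `i`-th of `N` gadgets consists of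
the vertex `w i` to be precolored and of the vertices `x i a`, `y i s b` and `u i`. -/
inductive Vert_s6 (N m : ℕ)
  | w (i : Fin N)
  | x (i : Fin N) (a : ZMod m)
  | y (i : Fin N) (s : Bool) (b : ZMod m)
  | u (i : Fin N)
  | z (a : ZMod m)

lemma Vert_s6.finite (N m : ℕ) [NeZero m] : Finite (Vert_s6 N m) := by
  let f : (Fin N ⊕ (Fin N × ZMod m)) ⊕ ((Fin N × Bool × ZMod m) ⊕ (Fin N ⊕ ZMod m)) → Vert_s6 N m
    | .inl (.inl i) => .w i
    | .inl (.inr (i, a)) => .x i a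
    | .inr (.inl (i, s, b)) => .y i s b
    | .inr (.inr (.inl i)) => .u i
    | .inr (.inr (.inr a)) => .z a
  refine Finite.of_surjective f ?_
  rintro (i | ⟨i, a⟩ | ⟨i, s, b⟩ | i | a)
  · exact ⟨.inl (.inl i), rfl⟩
  · exact ⟨.inl (.inr (i, a)), rfl⟩
  · exact ⟨.inr (.inl (i, s, b)), rfl⟩
  · exact ⟨.inr (.inr (.inl i)), rfl⟩
  · exact ⟨.inr (.inr (.inr a)), rfl⟩

/-- The edges of the graph, each in one direction. The vertices `x i a` and `z a` stand for the arc
of length `2 * h` starting at `a`, and `y i s b` for the arc of length `h` starting at `b`. -/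
inductive Edge {N m : ℕ} (h : ℕ) : Vert_s6 N m → Vert_s6 N m → Prop
  | wx (i : Fin N) (a : ZMod m) : Edge h (.w i) (.x i a)
  | xu (i : Fin N) (a : ZMod m) : Edge h (.x i a) (.u i)
  | xy (i : Fin N) (a : ZMod m) (s : Bool) (b : ZMod m) :
      Disjoint (cycArc a (2 * h)) (cycArc b h) → Edge h (.x i a) (.y i s b)
  | yy (i : Fin N) (b b' : ZMod m) :
      Disjoint (cycArc b h) (cycArc b' h) → Edge h (.y i false b) (.y i true b')
  | zu (i : Fin N) (a : ZMod m) : Edge h (.z a) (.u i)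
  | zy (i : Fin N) (a : ZMod m) (s : Bool) (b : ZMod m) :
      Disjoint (cycArc a (2 * h)) (cycArc b h) → Edge h (.z a) (.y i s b)

/-- The graph with edge relation `Edge h`. -/
def gadgetGraph (N m h : ℕ) : SimpleGraph (Vert_s6 N m) := SimpleGraph.fromRel (Edge h)

lemma Edge.adj {N m h : ℕ} {v v' : Vert_s6 N m} (e : Edge h v v') :
    (gadgetGraph N m h).Adj v v' := by
  refine (SimpleGraph.fromRel_adj _ _ _).2 ⟨?_, Or.inl e⟩
  rintro rfl
  cases e

/-- A property symmetric in the two vertices holds for adjacent vertices if it holds along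
`Edge`. -/
lemma gadgetGraph_adj_elim {N m h : ℕ} {p : Vert_s6 N m → Vert_s6 N m → Prop}
    (hsymm : ∀ v v', p v v' → p v' v) (hp : ∀ v v', Edge h v v' → p v v') {v v' : Vert_s6 N m}
    (hadj : (gadgetGraph N m h).Adj v v') : p v v' := by
  rcases ((SimpleGraph.fromRel_adj _ _ _).1 hadj).2 with e | e
  · exact hp _ _ e
  · exact hsymm _ _ (hp _ _ e)

/-- A lower bound for the distance of a vertex from `w i`, changing by at most one along each
edge. -/
def level {N m : ℕ} (i : Fin N) : Vert_s6 N m → ℤ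
  | .w j => if j = i then 0 else 6
  | .x j _ => if j = i then 1 else 5
  | .y j _ _ => if j = i then 2 else 4
  | .u j => if j = i then 2 else 4
  | .z _ => 3

lemma abs_level_sub_le {N m h : ℕ} (i : Fin N) {v v' : Vert_s6 N m}
    (hadj : (gadgetGraph N m h).Adj v v') : |level i v - level i v'| ≤ 1 := by
  refine gadgetGraph_adj_elim (p := fun v v' => |level i v - level i v'| ≤ 1) ?_ ?_ hadj
  · intro v v' hv
    rwa [abs_sub_comm]
  · rintro _ _ (⟨j, a⟩ | ⟨j, a⟩ | ⟨j, a, s, b, hd⟩ | ⟨j, b, b', hd⟩ | ⟨j, a⟩ | ⟨j, a, s, b, hd⟩) <;>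
      simp only [level] <;> split_ifs <;> norm_num

lemma level_le_of_walk {N m h : ℕ} (i : Fin N) {v v' : Vert_s6 N m}
    (p : (gadgetGraph N m h).Walk v v') : level i v' ≤ level i v + p.length := by
  induction p with
  | nil => simp
  | cons hadj p ih =>
    have := (abs_le.1 (abs_level_sub_le i hadj)).1
    rw [SimpleGraph.Walk.length_cons]
    push_cast
    linarith

lemma distAtLeast_gadgetGraph (N m h : ℕ) :
    DistAtLeast (gadgetGraph N m h) 6 (Set.range Vert_s6.w) := by
  rintro _ ⟨i, rfl⟩ _ ⟨j, rfl⟩ hij p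
  have hji : j ≠ i := fun hc => hij (by rw [hc])
  have := level_le_of_walk i p
  simp only [level, hji, if_true, if_false] at this
  omega

/-- The multicoloring behind `k`-colorability. The colors are `2 * h` extra ones, in two halves
indexed by `Bool`, and the `m` points of the cycle; every vertex receives `2 * h` of them. -/
def vertLabel {N m : ℕ} (h : ℕ) : Vert_s6 N m → Finset ((Bool × Fin h) ⊕ ZMod m)
  | .w _ => Finset.univ.disjSum ∅
  | .x _ a => (∅ : Finset (Bool × Fin h)).disjSum (cycArc a (2 * h))
  | .y _ s b => (({s} : Finset Bool) ×ˢ (Finset.univ : Finset (Fin h))).disjSum (cycArc b h)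
  | .u _ => Finset.univ.disjSum ∅
  | .z a => (∅ : Finset (Bool × Fin h)).disjSum (cycArc a (2 * h))

lemma disjoint_disjSum {α β : Type*} {s s' : Finset α} {t t' : Finset β} (hs : Disjoint s s')
    (ht : Disjoint t t') : Disjoint (s.disjSum t) (s'.disjSum t') := by
  rw [Finset.disjoint_left] at *
  rintro (a | b) <;> simp only [Finset.inl_mem_disjSum, Finset.inr_mem_disjSum]
  · exact fun ha => hs ha
  · exact fun hb => ht hb

lemma fracColorable_gadgetGraph (N : ℕ) {m h : ℕ} [NeZero m] (hh : 0 < h) (hm : 2 * h ≤ m) :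
    FracColorable (gadgetGraph N m h) (((2 * h + m : ℕ) : ℝ) / (2 * h : ℕ)) := by
  have hcard : Fintype.card ((Bool × Fin h) ⊕ ZMod m) = 2 * h + m := by
    simp [ZMod.card]
  rw [← hcard]
  refine fracColorable_of_multicoloring _ (by omega) (vertLabel h) ?_ ?_
  · rintro (i | ⟨i, a⟩ | ⟨i, s, b⟩ | i | a) <;>
      simp only [vertLabel, Finset.card_disjSum, Finset.card_empty, Finset.card_univ,
        Finset.card_product, Finset.card_singleton, Fintype.card_prod, Fintype.card_bool,
        Fintype.card_fin, card_cycArc _ hm, card_cycArc _ (show h ≤ m by omega)] <;> ring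
  · intro v v' hadj
    refine gadgetGraph_adj_elim (p := fun v v' => Disjoint (vertLabel h v) (vertLabel h v'))
      (fun _ _ hd => hd.symm) ?_ hadj
    rintro _ _ (⟨j, a⟩ | ⟨j, a⟩ | ⟨j, a, s, b, hd⟩ | ⟨j, b, b', hd⟩ | ⟨j, a⟩ | ⟨j, a, s, b, hd⟩)
    · exact disjoint_disjSum (Finset.disjoint_empty_right _) (Finset.disjoint_empty_left _)
    · exact disjoint_disjSum (Finset.disjoint_empty_left _) (Finset.disjoint_empty_right _)
    · exact disjoint_disjSum (Finset.disjoint_empty_left _) hd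
    · refine disjoint_disjSum ?_ hd
      rw [Finset.disjoint_left]
      rintro ⟨s, c⟩ h1 h2
      simp only [Finset.mem_product, Finset.mem_singleton] at h1 h2
      simp [h1.1] at h2
    · exact disjoint_disjSum (Finset.disjoint_empty_left _) (Finset.disjoint_empty_right _)
    · exact disjoint_disjSum (Finset.disjoint_empty_left _) hd

/-- The main inequality. Colors outside `c (w i)` are counted on the vertices `x i a`, colors in
`c (w i)` on the core vertices `z a`; both sets of vertices form, together with the vertices
`y i s b` and `u i`, a copy of the same weighted graph. -/
lemma gadget_bound {N m h : ℕ} [NeZero m] (h1 : 3 * h ≤ m) (h2 : m ≤ 4 * h) {r : ℝ}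
    {c : Vert_s6 N m → Set ℝ} (hc : IsFracColoring (gadgetGraph N m h) r c) (i : Fin N) :
    (m : ℝ) * (2 * h + m) + 2 * h * ∑ a, volume.real (c (.z a) ∩ c (.w i)) ≤ 2 * h * m * r := by
  obtain ⟨hsub, hmeas, hvol, hdisj⟩ := hc
  have hr : 0 ≤ r := by
    by_contra! hneg
    have := hvol (.w i)
    rw [Set.subset_empty_iff.1 ((hsub (.w i)).trans (Set.Ico_eq_empty (by linarith)).subset)] at this
    simp at this
  have hreal : ∀ v, volume.real (c v) = 1 := fun v => by simp [Measure.real, hvol v]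
  have hd : ∀ {v v'}, Edge h v v' → Disjoint (c v) (c v') := fun e => hdisj _ _ e.adj
  have key := weight_measure h1 h2 hr (fun a => c (.x i a) ∪ (c (.z a) ∩ c (.w i)))
    (fun s b => c (.y i s b)) (c (.u i))
    (fun a => (hmeas _).union ((hmeas _).inter (hmeas _))) (fun _ _ => hmeas _) (hmeas _)
    (fun a => Set.union_subset (hsub _) (Set.inter_subset_left.trans (hsub _)))
    (fun _ _ => hsub _) (hsub _)
    (fun a => Disjoint.union_left (hd (.xu i a))
      ((hd (.zu i a)).mono_left Set.inter_subset_left))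
    (fun a s b hab => Disjoint.union_left (hd (.xy i a s b hab))
      ((hd (.zy i a s b hab)).mono_left Set.inter_subset_left))
    (fun b b' hbb => hd (.yy i b b' hbb))
  have hB : ∀ a, volume.real (c (.x i a) ∪ (c (.z a) ∩ c (.w i)))
      = 1 + volume.real (c (.z a) ∩ c (.w i)) := by
    intro a
    rw [measureReal_union _ ((hmeas _).inter (hmeas _)) (by simp [hvol])
      ((measure_mono Set.inter_subset_left).trans_lt (by simp [hvol])).ne, hreal]
    exact (hd (.wx i a)).symm.mono_right Set.inter_subset_right
  simp only [hB, hreal, Finset.sum_add_distrib, Finset.sum_const, Finset.card_univ, ZMod.card,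
    nsmul_eq_mul, mul_one] at key
  linarith

end Graph

/-- Lower bound for distance six. -/
theorem lower_bound_d6 (k : ℚ) (hk1 : 5 / 2 ≤ k) (hk2 : k < 3) (ε : ℝ) (hε : 0 < ε)
    (h : ε < 1 / ((k : ℝ) + ε)) :
    ∃ (V : Type) (_ : Fintype V) (G : SimpleGraph V) (W : Set V) (P : V → Set ℝ),
      IsFracChromNum G (k : ℝ) ∧ DistAtLeast G 6 W ∧
        IsFracPrecoloring ((k : ℝ) + ε) W P ∧
        ¬ ∃ c, IsFracColoring G ((k : ℝ) + ε) c ∧ ∀ w ∈ W, c w = P w := by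

  -- `k = (2 * h + m) / (2 * h)` with `3 * h ≤ m ≤ 4 * h`
  obtain ⟨h', m, hh, h1, h2, hkm⟩ : ∃ h m : ℕ, 0 < h ∧ 3 * h ≤ m ∧ m ≤ 4 * h ∧
      (k : ℝ) = ((2 * h + m : ℕ) : ℝ) / (2 * h : ℕ) := by
    have hd : (0 : ℚ) < k.den := by exact_mod_cast k.den_pos
    have hkd : k * k.den = k.num := Rat.mul_den_eq_num k
    have e1 : (5 : ℚ) * k.den ≤ 2 * k.num := by rw [← hkd]; nlinarith
    have e2 : (k.num : ℚ) < 3 * k.den := by rw [← hkd]; nlinarith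
    have e1' : (5 : ℤ) * k.den ≤ 2 * k.num := by exact_mod_cast e1
    have e2' : k.num < (3 : ℤ) * k.den := by exact_mod_cast e2
    have hpos := k.den_pos
    refine ⟨k.den, (2 * k.num - 2 * k.den).toNat, hpos, by omega, by omega, ?_⟩
    have hsum : 2 * k.den + (2 * k.num - 2 * k.den).toNat = (2 * k.num).toNat := by omega
    have hcast : (((2 * k.num).toNat : ℕ) : ℝ) = 2 * (k.num : ℝ) := by
      have : (((2 * k.num).toNat : ℕ) : ℤ) = 2 * k.num := Int.toNat_of_nonneg (by omega)
      exact_mod_cast this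
    have hkd' : (k : ℝ) * k.den = k.num := by exact_mod_cast hkd
    rw [hsum, hcast, ← hkd']
    have : (k.den : ℝ) ≠ 0 := by positivity
    push_cast
    field_simp
  have hm0 : 0 < m := by omega
  have : NeZero m := ⟨hm0.ne'⟩
  have hhR : (0 : ℝ) < h' := by exact_mod_cast hh
  have hmR : (0 : ℝ) < m := by exact_mod_cast hm0
  have hkR : (m : ℝ) * (2 * h' + m) = 2 * h' * m * k := by
    rw [hkm]
    push_cast
    field_simp
  have hk1' : (5 / 2 : ℝ) ≤ k := by
    have : ((5 / 2 : ℚ) : ℝ) ≤ k := by exact_mod_cast hk1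
    simpa using this
  set K : ℝ := (k : ℝ) + ε with hK
  have hK1 : 1 ≤ K := by linarith
  -- `N` is so large that rounding `N / K` down costs less than the slack in `ε < 1 / K`
  obtain ⟨N, hN⟩ := exists_nat_gt (1 / (1 / K - ε))
  have hgap : 0 < 1 / K - ε := by linarith
  have hNR : (0 : ℝ) < N := lt_trans (by positivity) hN
  have hN0 : 0 < N := by exact_mod_cast hNR
  rw [div_lt_iff₀ hgap] at hN
  let M := ⌊(N : ℝ) / K⌋₊
  have hM1 : (M : ℝ) * K ≤ N := by
    rw [← le_div_iff₀ (by linarith)]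
    exact Nat.floor_le (by positivity)
  have hM2 : (N : ℝ) / K < M + 1 := Nat.lt_floor_add_one _
  let P : Vert_s6 N m → Set ℝ := fun v => match v with
    | .w i => wrapIco K (i * (K / N))
    | _ => ∅
  refine ⟨Vert_s6 N m, @Fintype.ofFinite _ (Vert_s6.finite N m), gadgetGraph N m h', Set.range Vert_s6.w, P,
    ⟨?_, ?_⟩, distAtLeast_gadgetGraph N m h', ?_, ?_⟩
  · rw [hkm]
    exact fracColorable_gadgetGraph N hh (by omega)
  · rintro r' ⟨c, hc⟩
    have := gadget_bound h1 h2 hc ⟨0, hN0⟩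
    have hnn : 0 ≤ 2 * (h' : ℝ) * ∑ a, volume.real (c (.z a) ∩ c (.w ⟨0, hN0⟩)) := by positivity
    rw [hkR] at this
    exact le_of_mul_le_mul_left (by linarith) (show (0 : ℝ) < 2 * h' * m by positivity)
  · rintro _ ⟨i, rfl⟩
    have hi : (i : ℝ) * (K / N) < K := by
      have : (i : ℝ) < N := by exact_mod_cast i.2
      rw [← mul_div_assoc, div_lt_iff₀ hNR, mul_comm]
      exact mul_lt_mul_of_pos_left this (by linarith)
    exact ⟨wrapIco_subset hK1 (by positivity) hi, measurableSet_wrapIco _ _,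
      volume_wrapIco hK1 hi⟩
  · rintro ⟨c, hc, hcP⟩
    have hw : ∀ i : Fin N, c (.w i) = wrapIco K (i * (K / N)) := fun i => hcP _ ⟨i, rfl⟩
    have hz : ∀ a, (M : ℝ) ≤ ∑ i : Fin N, volume.real (c (.z a) ∩ c (.w i)) := by
      intro a
      have := sum_inter_wrapIco hK1 hN0 hM1 (hc.2.1 (.z a)) (hc.1 (.z a))
      simp only [← hw] at this
      simpa [Measure.real, hc.2.2.1] using this
    have hsum := Finset.sum_le_sum fun (i : Fin N) (_ : i ∈ Finset.univ) => gadget_bound h1 h2 hc i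
    have hz' := Finset.sum_le_sum fun (a : ZMod m) (_ : a ∈ Finset.univ) => hz a
    simp only [hkR, Finset.sum_add_distrib, Finset.sum_const, Finset.card_univ, Fintype.card_fin,
      ZMod.card, nsmul_eq_mul] at hsum hz'
    rw [← Finset.mul_sum, Finset.sum_comm] at hsum
    have hfin : 2 * (h' : ℝ) * m * (N * k + M) ≤ 2 * h' * m * (N * K) := by
      have := mul_le_mul_of_nonneg_left hz' (show (0 : ℝ) ≤ 2 * h' by positivity)
      linarith
    have hle := le_of_mul_le_mul_left hfin (by positivity)
    rw [hK] at hle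
    have : (N : ℝ) * (1 / K - ε) = N / K - N * ε := by ring
    linarith
end
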